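/- arXiv:2504.05123 — 4 statements merged into one kernel-verified Lean document; each statement's English description precedes it below -/
import Mathlib

section
/- Let n ≥ 1 and let σ be a cyclically alternating permutation of {1,…,2n}. Then for every cyclically alternating permutation τ of {1,…,2n} with E(σ) ⊆ vert(τ), one has inv(σ) ≤ inv(τ); moreover, if inv(τ) = inv(σ) then τ = σ. In other words, σ is the unique minimizer of the inversion number among all cyclically alternating permutations τ with E(σ) ⊆ vert(τ). -/
/-- The cyclic successor of an index/value in `Fin m` (i.e. `i + 1 mod m`). -/
def cyclicSucc {m : ℕ} (i : Fin m) : Fin m := ⟨((i : ℕ) + 1) % m, Nat.mod_lt _ i.pos⟩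

/-- `σ` (a permutation of `{0,…,2n−1}`, standing for `{1,…,2n}`) is cyclically
alternating: `σ_1 < σ_2 > σ_3 < ⋯ > σ_{2n−1} < σ_{2n} > σ_1` (0-indexed, with
indices taken cyclically). -/
def IsCAP {n : ℕ} (σ : Equiv.Perm (Fin (2 * n))) : Prop :=
  ∀ i : Fin (2 * n),
    (Even (i : ℕ) → σ i < σ (cyclicSucc i)) ∧ (Odd (i : ℕ) → σ (cyclicSucc i) < σ i)

/-- The cyclic swap set of `σ`: values `k` (with `k+1` also a value, i.e.
`k ∈ {1,…,2n−1}` in 1-indexed terms) such that `σ⁻¹(k) > σ⁻¹(k+1) + 1`. -/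
def CSwapSet {n : ℕ} (σ : Equiv.Perm (Fin (2 * n))) : Set (Fin (2 * n)) :=
  {k | (k : ℕ) + 1 < 2 * n ∧
    ((σ⁻¹ (cyclicSucc k) : Fin (2 * n)) : ℕ) + 1 < ((σ⁻¹ k : Fin (2 * n)) : ℕ)}

/-- The cyclic swap statistic `cswap(σ)`. -/
noncomputable def cswap {n : ℕ} (σ : Equiv.Perm (Fin (2 * n))) : ℕ := (CSwapSet σ).ncard

/-- The inversion number of `σ`: the number of pairs of positions `i < j`
with `σ_i > σ_j`. -/
noncomputable def inv {n : ℕ} (σ : Equiv.Perm (Fin (2 * n))) : ℕ :=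
  Set.ncard {p : Fin (2 * n) × Fin (2 * n) | p.1 < p.2 ∧ σ p.2 < σ p.1}

/-- The `0/1`-vector `v_k^σ`: the `j`-th coordinate is `1` iff the (1-indexed)
value `σ_j` exceeds `k`. -/
def vertexVec {n : ℕ} (σ : Equiv.Perm (Fin (2 * n))) (k : ℕ) : Fin (2 * n) → ℕ :=
  fun j => if k < (σ j : ℕ) + 1 then 1 else 0

/-- `vert(σ) = {v_0^σ, …, v_{2n}^σ}`. -/
def vert {n : ℕ} (σ : Equiv.Perm (Fin (2 * n))) : Set (Fin (2 * n) → ℕ) :=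
  {v | ∃ k ≤ 2 * n, v = vertexVec σ k}

/-- The CAP `σ` cyclically swaps to the CAP `τ`: `τ` is obtained from `σ` by
exchanging the values `i` and `i+1` for some `i` lying to the right of `i+1`
in `σ`. -/
def CSwapsTo {n : ℕ} (σ τ : Equiv.Perm (Fin (2 * n))) : Prop :=
  IsCAP σ ∧ IsCAP τ ∧ ∃ i : Fin (2 * n), (i : ℕ) + 1 < 2 * n ∧
    ((σ⁻¹ (cyclicSucc i) : Fin (2 * n)) : ℕ) < ((σ⁻¹ i : Fin (2 * n)) : ℕ) ∧
    τ = (Equiv.swap i (cyclicSucc i)) * σ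

/-- `E(σ)`: vertices of `σ` missing from some CAP that `σ` cyclically swaps to. -/
def ESet {n : ℕ} (σ : Equiv.Perm (Fin (2 * n))) : Set (Fin (2 * n) → ℕ) :=
  {v | v ∈ vert σ ∧ ∃ τ, CSwapsTo σ τ ∧ v ∉ vert τ}

theorem my_ias {m : ℕ} (f : Equiv.Perm (Fin m)) (x : Fin m) : f⁻¹ (f x) = x := by simp

theorem my_ais {m : ℕ} (f : Equiv.Perm (Fin m)) (x : Fin m) : f (f⁻¹ x) = x := by simp

theorem cs_val {m : ℕ} (i : Fin m) (h : (i : ℕ) + 1 < m) : ((cyclicSucc i : Fin m) : ℕ) = i + 1 := by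
  simp [cyclicSucc, Nat.mod_eq_of_lt h]

theorem swap_lt {m : ℕ} (k l x y : Fin m) (hl : (l : ℕ) = k + 1) (hxy : x < y)
    (hne : ¬ (x = k ∧ y = l)) : Equiv.swap k l x < Equiv.swap k l y := by
  simp only [Equiv.swap_apply_def]
  simp only [Fin.lt_def, Fin.ext_iff] at *
  split_ifs <;> omega

theorem swap_cap {n : ℕ} (σ : Equiv.Perm (Fin (2 * n))) (hσ : IsCAP σ) (k : Fin (2 * n))
    (hk : k ∈ CSwapSet σ) : IsCAP (Equiv.swap k (cyclicSucc k) * σ) := by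
  obtain ⟨h1, h2⟩ := hk
  have hl := cs_val k h1
  intro x
  refine ⟨fun he => ?_, fun ho => ?_⟩
  · simp only [Equiv.Perm.mul_apply]
    refine swap_lt k _ _ _ hl ((hσ x).1 he) ?_
    rintro ⟨e1, e2⟩
    rw [← e2, ← e1] at h2
    simp only [my_ias] at h2
    obtain ⟨r, hr⟩ := he
    rw [cs_val x (by have := x.2; omega)] at h2
    omega
  · simp only [Equiv.Perm.mul_apply]
    refine swap_lt k _ _ _ hl ((hσ x).2 ho) ?_
    rintro ⟨e1, e2⟩
    rw [← e2, ← e1] at h2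
    simp only [my_ias] at h2
    have : ((cyclicSucc x : Fin (2 * n)) : ℕ) ≤ x + 1 := by
      simp only [cyclicSucc]; exact Nat.mod_le _ _
    omega

theorem mem_E {n : ℕ} (σ : Equiv.Perm (Fin (2 * n))) (hσ : IsCAP σ) (k : Fin (2 * n))
    (hk : k ∈ CSwapSet σ) : vertexVec σ (k + 1) ∈ ESet σ := by
  obtain ⟨h1, h2⟩ := id hk
  have hl := cs_val k h1
  refine ⟨⟨k + 1, by omega, rfl⟩, Equiv.swap k (cyclicSucc k) * σ,
    ⟨hσ, swap_cap σ hσ k hk, k, h1, by omega, rfl⟩, ?_⟩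
  rintro ⟨m, -, hm⟩
  have a := congrFun hm (σ⁻¹ k)
  have b := congrFun hm (σ⁻¹ (cyclicSucc k))
  simp only [vertexVec, Equiv.Perm.mul_apply, my_ais, Equiv.swap_apply_left,
    Equiv.swap_apply_right, hl] at a b
  split_ifs at a b <;> omega

theorem block {n : ℕ} (σ : Equiv.Perm (Fin (2 * n))) (hσ : IsCAP σ) (a : Fin (2 * n)) (d : ℕ) :
    ∀ b : Fin (2 * n), (b : ℕ) = a + d → (∀ k ∈ CSwapSet σ, a ≤ k → ¬ k < b) →
    ((σ⁻¹ a : Fin (2 * n)) : ℕ) ≤ (σ⁻¹ b : Fin (2 * n)) ∨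
    ((σ⁻¹ a : Fin (2 * n)) : ℕ) = (σ⁻¹ b : Fin (2 * n)) + 1 := by
  induction d with
  | zero =>
    intro b hb _
    have : b = a := Fin.ext (by omega)
    subst this; left; exact le_rfl
  | succ d ih =>
    intro b hb hno
    have hb2 := b.2
    obtain ⟨c, hc⟩ : ∃ c : Fin (2 * n), (c : ℕ) = a + d := ⟨⟨a + d, by omega⟩, rfl⟩
    have hcb : cyclicSucc c = b := Fin.ext (by rw [cs_val c (by omega)]; omega)
    have h := ih c hc (fun k hk h1 h2 => hno k hk h1 (by rw [Fin.lt_def] at *; omega))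
    have hcn : c ∉ CSwapSet σ := fun hk => hno c hk (by rw [Fin.le_def]; omega)
      (by rw [Fin.lt_def]; omega)
    have hs : ((σ⁻¹ c : Fin (2 * n)) : ℕ) ≤ (σ⁻¹ b : Fin (2 * n)) + 1 := by
      by_contra hh
      exact hcn ⟨by omega, by rw [hcb]; omega⟩
    have ne1 : ((σ⁻¹ b : Fin (2 * n)) : ℕ) ≠ (σ⁻¹ a : Fin (2 * n)) := by
      intro e
      have := σ⁻¹.injective (Fin.ext e)
      rw [this] at hb; omega
    have ne2 : ((σ⁻¹ b : Fin (2 * n)) : ℕ) ≠ (σ⁻¹ c : Fin (2 * n)) := by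
      intro e
      have := σ⁻¹.injective (Fin.ext e)
      rw [this] at hb; omega
    by_contra hcon
    have e1 : ((σ⁻¹ a : Fin (2 * n)) : ℕ) = (σ⁻¹ c : Fin (2 * n)) + 1 := by omega
    have e2 : ((σ⁻¹ c : Fin (2 * n)) : ℕ) = (σ⁻¹ b : Fin (2 * n)) + 1 := by omega
    have f1 : cyclicSucc (σ⁻¹ c) = σ⁻¹ a :=
      Fin.ext (by rw [cs_val _ (by have := (σ⁻¹ a).2; omega)]; omega)
    have f2 : cyclicSucc (σ⁻¹ b) = σ⁻¹ c :=
      Fin.ext (by rw [cs_val _ (by have := (σ⁻¹ c).2; omega)]; omega)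
    rcases Nat.even_or_odd ((σ⁻¹ b : Fin (2 * n)) : ℕ) with he | ho
    · have := (hσ (σ⁻¹ b)).1 he
      rw [f2] at this
      simp only [my_ais, Fin.lt_def] at this
      omega
    · have := (hσ (σ⁻¹ c)).1 (by rw [e2]; exact ho.add_one)
      rw [f1] at this
      simp only [my_ais, Fin.lt_def] at this
      omega

theorem inv_sub {n : ℕ} (σ τ : Equiv.Perm (Fin (2 * n))) (hσ : IsCAP σ) (hτ : IsCAP τ)
    (hE : ESet σ ⊆ vert τ) (p q : Fin (2 * n)) (hpq : p < q) (h : σ q < σ p) : τ q < τ p := by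
  by_cases hk : ∃ k ∈ CSwapSet σ, σ q ≤ k ∧ k < σ p
  · obtain ⟨k, hk, h1, h2⟩ := hk
    obtain ⟨m, -, hm⟩ := hE (mem_E σ hσ k hk)
    have a := congrFun hm p
    have b := congrFun hm q
    simp only [vertexVec] at a b
    simp only [Fin.lt_def, Fin.le_def] at *
    split_ifs at a b <;> omega
  · have hb := block σ hσ (σ q) (σ p - σ q) (σ p) (by rw [Fin.lt_def] at h; omega)
      (fun k hk' h1 h2 => hk ⟨k, hk', h1, h2⟩)
    simp only [my_ias] at hb
    rw [Fin.lt_def] at hpq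
    have hq : cyclicSucc p = q := Fin.ext (by rw [cs_val _ (by have := q.2; omega)]; omega)
    rcases Nat.even_or_odd (p : ℕ) with he | ho
    · have := (hσ p).1 he
      rw [hq] at this
      exact absurd this h.asymm
    · have := (hτ p).2 ho
      rwa [hq] at this

theorem cap_unique_inversion_minimizer (n : ℕ) (hn : 1 ≤ n)
    (σ τ : Equiv.Perm (Fin (2 * n))) (hσ : IsCAP σ) (hτ : IsCAP τ)
    (hE : ESet σ ⊆ vert τ) :
    inv σ ≤ inv τ ∧ (inv τ = inv σ → τ = σ) := by
  have hsub : {p : Fin (2 * n) × Fin (2 * n) | p.1 < p.2 ∧ σ p.2 < σ p.1} ⊆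
      {p : Fin (2 * n) × Fin (2 * n) | p.1 < p.2 ∧ τ p.2 < τ p.1} :=
    fun p hp => ⟨hp.1, inv_sub σ τ hσ hτ hE _ _ hp.1 hp.2⟩
  refine ⟨Set.ncard_le_ncard hsub (Set.toFinite _), fun he => ?_⟩
  have heq := Set.eq_of_subset_of_ncard_le hsub (le_of_eq he) (Set.toFinite _)
  have key : ∀ p q, p < q → (σ q < σ p ↔ τ q < τ p) := by
    intro p q hpq
    have := Set.ext_iff.1 heq (p, q)
    simpa [hpq] using this
  have hmono : ∀ p q, τ p < τ q → σ p < σ q := by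
    intro p q h
    rcases lt_trichotomy p q with h1 | h1 | h1
    · have h2 : ¬ σ q < σ p := fun h3 => h.asymm ((key p q h1).1 h3)
      exact lt_of_le_of_ne (not_lt.1 h2) (fun e => h1.ne (σ.injective e))
    · subst h1; exact absurd h (lt_irrefl _)
    · exact (key q p h1).2 h
  have hs : StrictMono (fun x => σ (τ⁻¹ x)) := by
    intro x y hxy
    exact hmono _ _ (by simpa using hxy)
  have hid : (fun x => σ (τ⁻¹ x)) = id := by
    refine (StrictMono.range_inj hs strictMono_id).1 ?_
    rw [Set.range_id]
    exact (σ.surjective.comp τ⁻¹.surjective).range_eq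
  ext x
  have := congrFun hid (τ x)
  simp at this
  rw [this]
end

section
/- Let n ≥ 1. Then cswap(σ) ≤ 2n−2 for every cyclically alternating permutation σ of {1,…,2n}, and there exists a cyclically alternating permutation σ of {1,…,2n} with cswap(σ) = 2n−2; in particular, the permutation (n, 2n, n−1, 2n−1, …, 1, n+1) (i.e., σ_{2k−1} = n+1−k and σ_{2k} = 2n+1−k for 1 ≤ k ≤ n) is cyclically alternating and has cswap equal to 2n−2. -/
/-- The extremal permutation. -/
def extPerm (n : ℕ) : Equiv.Perm (Fin (2 * n)) where
  toFun p := ⟨if (p : ℕ) % 2 = 0 then n - (p : ℕ) / 2 - 1 else 2 * n - ((p : ℕ) + 1) / 2, by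
    have := p.2
    split_ifs <;> omega⟩
  invFun v := ⟨if (v : ℕ) < n then 2 * (n - 1 - v) else 2 * (2 * n - v) - 1, by
    have := v.2
    split_ifs <;> omega⟩
  left_inv p := by
    have := p.2
    apply Fin.ext
    simp only
    split_ifs <;> omega
  right_inv v := by
    have := v.2
    apply Fin.ext
    simp only
    split_ifs <;> omega

lemma extPerm_val (n : ℕ) (p : Fin (2 * n)) : (extPerm n p : ℕ) =
    if (p : ℕ) % 2 = 0 then n - (p : ℕ) / 2 - 1 else 2 * n - ((p : ℕ) + 1) / 2 := rfl

lemma extPerm_inv_val (n : ℕ) (v : Fin (2 * n)) : (((extPerm n)⁻¹ v : Fin (2 * n)) : ℕ) =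
    if (v : ℕ) < n then 2 * (n - 1 - v) else 2 * (2 * n - v) - 1 := rfl

lemma cyclicSucc_cases {m : ℕ} (i : Fin m) :
    ((i : ℕ) + 1 < m ∧ (cyclicSucc i : ℕ) = i + 1) ∨
    ((i : ℕ) + 1 = m ∧ (cyclicSucc i : ℕ) = 0) := by
  have := i.2
  rcases Nat.lt_or_ge ((i : ℕ) + 1) m with h | h
  · exact Or.inl ⟨h, Nat.mod_eq_of_lt h⟩
  · have h' : (i : ℕ) + 1 = m := by omega
    refine Or.inr ⟨h', ?_⟩
    simp [cyclicSucc, h']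

lemma ncard_compl_pair {m : ℕ} (a b : Fin m) (h : a ≠ b) :
    (({a, b} : Set (Fin m))ᶜ).ncard = m - 2 := by
  rw [Set.ncard_compl, Set.ncard_pair h]
  simp

lemma exists_not_swap (n : ℕ) (hn : 1 ≤ n) (σ : Equiv.Perm (Fin (2 * n))) (h : IsCAP σ) :
    ∃ k : Fin (2 * n), (k : ℕ) + 1 < 2 * n ∧ k ∉ CSwapSet σ := by
  by_contra! hc
  have key : ∀ d : ℕ, ∀ a b : Fin (2 * n), (b : ℕ) = a + d →
      ((σ⁻¹ b : Fin (2 * n)) : ℕ) ≤ (σ⁻¹ a : Fin (2 * n)) := by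
    intro d
    induction d with
    | zero =>
      intro a b hab
      have : b = a := Fin.ext hab
      rw [this]
    | succ d ih =>
      intro a b hab
      have hb := b.2
      have h1 := (hc a (by omega)).2
      have h2 := ih (cyclicSucc a) b (by
        rcases cyclicSucc_cases a with h | h <;> omega)
      omega
  have h0 := (h ⟨0, by omega⟩).1 (by simp)
  have h1 := key _ _ _ (Nat.add_sub_cancel' (Nat.le_of_lt h0)).symm
  rcases cyclicSucc_cases (⟨0, by omega⟩ : Fin (2 * n)) with h | h
  · simp at h1
    omega
  · simp at h
    omega

/-- Corollary 5.14: `cswap(σ) ≤ 2n−2` for every cyclically alternating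
permutation `σ` of `{1,…,2n}`, and the permutation
`(n, 2n, n−1, 2n−1, …, 1, n+1)` is cyclically alternating with `cswap = 2n−2`
(values written `0`-indexed). -/
theorem cswap_max (n : ℕ) (hn : 1 ≤ n) :
    (∀ σ : Equiv.Perm (Fin (2 * n)), IsCAP σ → cswap σ ≤ 2 * n - 2) ∧
      ∃ σ : Equiv.Perm (Fin (2 * n)),
        (∀ p : Fin (2 * n), (σ p : ℕ) =
          if Even (p : ℕ) then n - (p : ℕ) / 2 - 1 else 2 * n - ((p : ℕ) + 1) / 2) ∧
        IsCAP σ ∧ cswap σ = 2 * n - 2 := by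
  constructor
  · intro σ h
    obtain ⟨k, hk, hk'⟩ := exists_not_swap n hn σ h
    have hne : k ≠ ⟨2 * n - 1, by omega⟩ := by
      intro e
      rw [e] at hk
      simp at hk
      omega
    rw [← ncard_compl_pair k _ hne]
    apply Set.ncard_le_ncard _ (Set.toFinite _)
    rintro x hx (rfl | hx')
    · exact hk' hx
    · have h1 := hx.1
      rw [Set.mem_singleton_iff.1 hx'] at h1
      simp at h1
      omega
  · refine ⟨extPerm n, ?_, ?_, ?_⟩
    · intro p
      rw [extPerm_val]
      simp only [Nat.even_iff]
    · intro i
      have := i.2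
      simp only [Nat.even_iff, Nat.odd_iff, Fin.lt_def, extPerm_val]
      rcases cyclicSucc_cases i with ⟨h, e⟩ | ⟨h, e⟩ <;> rw [e] <;>
        constructor <;> intro h <;> split_ifs <;> omega
    · have hne : (⟨n - 1, by omega⟩ : Fin (2 * n)) ≠ ⟨2 * n - 1, by omega⟩ := by
        simp only [ne_eq, Fin.mk.injEq]
        omega
      rw [← ncard_compl_pair _ _ hne, cswap]
      congr 1
      ext k
      have := k.2
      simp only [CSwapSet, Set.mem_setOf_eq, Set.mem_compl_iff, Set.mem_insert_iff,
        Set.mem_singleton_iff, Fin.ext_iff, extPerm_inv_val]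
      rcases cyclicSucc_cases k with ⟨h, e⟩ | ⟨h, e⟩ <;> rw [e] <;> split_ifs <;> omega
end

section
/- Let n ≥ 1. There exist nonnegative integers γ_0, γ_1, …, γ_{n−1} such that Σ_{σ ∈ CA_{2n}} t^{cswap(σ)} = Σ_{j=0}^{n−1} γ_j · t^j · (1+t)^{2n−2−2j} as an identity of polynomials in ℤ[t]. (The left-hand side is the h*-polynomial of the order polytope of the crown poset C_{2n}, so this expresses its γ-nonnegativity.) -/
namespace CrownGamma

open Polynomial Finset

/-- Polynomials with nonnegative gamma expansion of degree `d`. -/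
noncomputable def Gam (d : ℕ) : AddSubmonoid ℤ[X] :=
  AddSubmonoid.closure {p | ∃ j e, 2 * j + e = d ∧ p = X ^ j * (1 + X) ^ e}

lemma gam_basic (j e : ℕ) : (X ^ j * (1 + X) ^ e : ℤ[X]) ∈ Gam (2 * j + e) :=
  AddSubmonoid.subset_closure ⟨j, e, rfl, rfl⟩

lemma gam_one : (1 : ℤ[X]) ∈ Gam 0 := by simpa using gam_basic 0 0
lemma gam_X : (X : ℤ[X]) ∈ Gam 2 := by simpa using gam_basic 1 0
lemma gam_one_add_X : (1 + X : ℤ[X]) ∈ Gam 1 := by simpa using gam_basic 0 1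

lemma gam_mul {d e : ℕ} {p q : ℤ[X]} (hp : p ∈ Gam d) (hq : q ∈ Gam e) :
    p * q ∈ Gam (d + e) := by
  induction hp using AddSubmonoid.closure_induction with
  | zero => simp
  | add x y _ _ hx hy => rw [add_mul]; exact add_mem hx hy
  | mem x hx =>
    obtain ⟨j, a, h, rfl⟩ := hx
    induction hq using AddSubmonoid.closure_induction with
    | zero => simp
    | add x y _ _ hx hy => rw [mul_add]; exact add_mem hx hy
    | mem y hy =>
      obtain ⟨k, b, h', rfl⟩ := hy
      refine AddSubmonoid.subset_closure ⟨j + k, a + b, by omega, by ring⟩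

lemma gam_mul' {d e f : ℕ} {p q : ℤ[X]} (hp : p ∈ Gam d) (hq : q ∈ Gam e) (h : d + e = f) :
    p * q ∈ Gam f := h ▸ gam_mul hp hq

lemma gam_exists {n : ℕ} (hn : 1 ≤ n) {p : ℤ[X]} (hp : p ∈ Gam (2 * n - 2)) :
    ∃ γ : ℕ → ℕ, p = ∑ j ∈ Finset.range n,
      (γ j : ℤ[X]) * X ^ j * (1 + X) ^ (2 * n - 2 - 2 * j) := by
  induction hp using AddSubmonoid.closure_induction with
  | zero => exact ⟨fun _ => 0, by simp⟩
  | add x y _ _ hx hy =>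
    obtain ⟨f, rfl⟩ := hx
    obtain ⟨g, rfl⟩ := hy
    refine ⟨fun j => f j + g j, ?_⟩
    rw [← Finset.sum_add_distrib]
    refine Finset.sum_congr rfl fun j _ => ?_
    push_cast; ring
  | mem x hx =>
    obtain ⟨j, e, h, rfl⟩ := hx
    refine ⟨fun i => if i = j then 1 else 0, ?_⟩
    rw [Finset.sum_eq_single j]
    · have : 2 * n - 2 - 2 * j = e := by omega
      simp [this]
    · intro b _ hb; simp [hb]
    · intro hj; simp at hj; omega

/-- Number of descents of a list. -/
def des : List ℕ → ℕ
  | [] => 0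
  | x :: l => (if ∃ y ∈ l.head?, y < x then 1 else 0) + des l

lemma des_append_lt (u v : List ℕ) (h : ∀ x ∈ u, ∀ y ∈ v.head?, x < y) :
    des (u ++ v) = des u + des v := by
  induction u with
  | nil => simp [des]
  | cons a u ih =>
    have ih := ih (fun x hx => h x (by simp [hx]))
    simp only [List.cons_append, des, ih]
    rcases u with _ | ⟨b, u⟩
    · have : ¬ ∃ y ∈ v.head?, y < a := by
        rintro ⟨y, hy, hlt⟩
        have := h a (by simp) y hy
        omega
      simp only [List.nil_append, this]
      simp [des]
    · simp; omega

lemma des_append_gt (u v : List ℕ) (hu : u ≠ []) (hv : v ≠ [])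
    (h : ∀ x ∈ u, ∀ y ∈ v.head?, y < x) :
    des (u ++ v) = des u + des v + 1 := by
  induction u with
  | nil => simp at hu
  | cons a u ih =>
    rcases u with _ | ⟨b, u⟩
    · obtain ⟨c, v, rfl⟩ := List.exists_cons_of_ne_nil hv
      have := h a (by simp) c (by simp)
      simp [des, this]
      omega
    · have ih := ih (by simp) (fun x hx => h x (by simp [hx]))
      simp only [List.cons_append, des] at ih ⊢
      simp at ih ⊢; omega

/-- All arrangements of a finite set. -/
noncomputable def arr (S : Finset ℕ) : Finset (List ℕ) := S.toList.permutations.toFinset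

lemma mem_arr {S : Finset ℕ} {w : List ℕ} : w ∈ arr S ↔ w.Nodup ∧ w.toFinset = S := by
  simp only [arr, List.mem_toFinset, List.mem_permutations]
  constructor
  · intro h
    exact ⟨h.nodup_iff.2 S.nodup_toList, by rw [List.toFinset_eq_of_perm _ _ h]; simp⟩
  · rintro ⟨h, rfl⟩
    exact (List.perm_of_nodup_nodup_toFinset_eq h (Finset.nodup_toList _) (by simp))

lemma perm_of_arr {w w' : List ℕ} (hw : w.Nodup) (h : w' ∈ arr w.toFinset) : w'.Perm w := by
  rw [mem_arr] at h
  exact List.perm_of_nodup_nodup_toFinset_eq h.1 hw h.2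

/-- Eulerian polynomial of a finite set. -/
noncomputable def E (S : Finset ℕ) : ℤ[X] := ∑ w ∈ arr S, X ^ des w

lemma takeWhile_append_dropWhile' {P : ℕ → Bool} {u v : List ℕ} (hu : ∀ x ∈ u, P x)
    (hv : ∀ x ∈ v.head?, P x = false) :
    (u ++ v).takeWhile P = u ∧ (u ++ v).dropWhile P = v := by
  have h1 : v.takeWhile P = [] := by
    rcases v with _ | ⟨a, v⟩
    · simp
    · have := hv a (by simp); simp [this]
  have h2 : v.dropWhile P = v := by
    rcases v with _ | ⟨a, v⟩
    · simp
    · have := hv a (by simp); simp [this]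
  rw [List.takeWhile_append_of_pos hu, List.dropWhile_append_of_pos hu]
  simp [h1, h2]

lemma head_dropWhile {P : ℕ → Bool} (w : List ℕ) : ∀ x ∈ (w.dropWhile P).head?, P x = false := by
  intro x hx
  have := List.head?_dropWhile_not P w
  rw [Option.mem_def] at hx
  rw [hx] at this
  simpa using this

lemma fiber (P : ℕ → Bool) (L : Finset (List ℕ)) (hnd : ∀ w ∈ L, w.Nodup)
    (hcl : ∀ w ∈ L, ∀ u, u.Perm (w.takeWhile P) → u ++ w.dropWhile P ∈ L)
    (a b : List ℕ → ℤ[X])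
    (hab : ∀ w ∈ L, X ^ des w = a (w.takeWhile P) * b (w.dropWhile P)) :
    ∑ w ∈ L, (X : ℤ[X]) ^ des w =
      ∑ U ∈ L.image (fun w => (w.takeWhile P).toFinset),
        (∑ u ∈ arr U, a u) *
          (∑ v ∈ (L.filter (fun w => (w.takeWhile P).toFinset = U)).image (List.dropWhile P),
            b v) := by
  rw [← Finset.sum_fiberwise_of_maps_to (t := L.image (fun w => (w.takeWhile P).toFinset))
    (g := fun w => (w.takeWhile P).toFinset) (fun w hw => Finset.mem_image_of_mem _ hw)]
  refine Finset.sum_congr rfl fun U _ => ?_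
  rw [Finset.sum_mul_sum, ← Finset.sum_product']
  have key : ∀ x ∈ arr U ×ˢ (L.filter (fun w => (w.takeWhile P).toFinset = U)).image
      (List.dropWhile P), x.1 ++ x.2 ∈ L ∧ (x.1 ++ x.2).takeWhile P = x.1 ∧
        (x.1 ++ x.2).dropWhile P = x.2 ∧ x.1.toFinset = U := by
    rintro ⟨u, v⟩ hx
    simp only [Finset.mem_product, Finset.mem_image, Finset.mem_filter] at hx
    obtain ⟨hu, w, ⟨hw, hU⟩, rfl⟩ := hx
    have hnd' : (w.takeWhile P).Nodup := (hnd w hw).sublist (List.takeWhile_sublist _)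
    have hp : u.Perm (w.takeWhile P) := perm_of_arr hnd' (by rwa [hU])
    have hP : ∀ x ∈ u, P x := fun x hx => List.mem_takeWhile_imp (hp.subset hx)
    have := takeWhile_append_dropWhile' hP (head_dropWhile (P := P) w)
    exact ⟨hcl w hw u hp, this.1, this.2, (mem_arr.1 hu).2⟩
  refine Finset.sum_bij' (fun w _ => (w.takeWhile P, w.dropWhile P)) (fun x _ => x.1 ++ x.2)
    ?_ ?_ ?_ ?_ ?_
  · intro w hw
    simp only [Finset.mem_filter] at hw
    simp only [Finset.mem_product, Finset.mem_image, Finset.mem_filter]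
    refine ⟨mem_arr.2 ⟨(hnd w hw.1).sublist (List.takeWhile_sublist _), hw.2⟩, w, hw, rfl⟩
  · intro x hx
    obtain ⟨h1, h2, h3, h4⟩ := key x hx
    simp only [Finset.mem_filter]
    exact ⟨h1, by rw [h2, h4]⟩
  · intro w hw
    simp
  · intro x hx
    obtain ⟨h1, h2, h3, h4⟩ := key x hx
    exact Prod.ext h2 h3
  · intro w hw
    simp only [Finset.mem_filter] at hw
    exact hab w hw.1

end CrownGamma

namespace CrownGamma

open Polynomial Finset

lemma E_empty : E ∅ = 1 := by
  have : arr ∅ = {[]} := by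
    ext w; simp only [mem_arr, Finset.mem_singleton]
    constructor
    · rintro ⟨_, h⟩; simpa using h
    · rintro rfl; simp
  simp [E, this, des]

lemma sum_cons_max (M : ℕ) (V : Finset ℕ) (hV : ∀ x ∈ V, x < M) :
    ∑ v ∈ (arr V).image (List.cons M), (X : ℤ[X]) ^ des v =
      if V = ∅ then 1 else X * E V := by
  rw [Finset.sum_image (by intro a _ b _ h; simpa using h)]
  split_ifs with h
  · subst h
    have : arr ∅ = {[]} := by
      ext w; simp only [mem_arr, Finset.mem_singleton]
      constructor
      · rintro ⟨_, h⟩; simpa using h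
      · rintro rfl; simp
    simp [this, des]
  · rw [E, Finset.mul_sum]
    refine Finset.sum_congr rfl fun v hv => ?_
    rw [mem_arr] at hv
    have hne : v ≠ [] := by rintro rfl; apply h; rw [← hv.2]; simp
    have := des_append_gt [M] v (by simp) hne (by
      intro x hx y hy
      simp only [List.mem_singleton] at hx
      subst hx
      apply hV
      rw [← hv.2, List.mem_toFinset]
      exact List.mem_of_mem_head? hy)
    simp only [List.singleton_append] at this
    rw [this]
    simp [des]
    ring

lemma E_rec (M : ℕ) (S : Finset ℕ) (hS : ∀ x ∈ S, x < M) :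
    E (insert M S) = ∑ U ∈ S.powerset, E U * (if S \ U = ∅ then 1 else X * E (S \ U)) := by
  have hMS : M ∉ S := fun h => lt_irrefl _ (hS M h)
  set P : ℕ → Bool := fun x => decide (x ≠ M) with hP
  -- structure of words
  have hstr : ∀ w ∈ arr (insert M S), ∃ v, w = w.takeWhile P ++ M :: v ∧ w.dropWhile P = M :: v ∧
      (w.takeWhile P).toFinset ⊆ S ∧ v ∈ arr (S \ (w.takeWhile P).toFinset) := by
    intro w hw
    rw [mem_arr] at hw
    have h0 := List.takeWhile_append_dropWhile (p := P) (l := w)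
    have hM : M ∈ w := by rw [← List.mem_toFinset, hw.2]; simp
    have hMt : M ∉ w.takeWhile P := fun h => by
      have := List.mem_takeWhile_imp h
      simp [hP] at this
    have hh := head_dropWhile (P := P) w
    have hsub : (w.takeWhile P).toFinset ⊆ S := by
      intro x hx
      rw [List.mem_toFinset] at hx
      have h1 : x ∈ w := (List.takeWhile_sublist _).subset hx
      rw [← List.mem_toFinset, hw.2, Finset.mem_insert] at h1
      rcases h1 with rfl | h1
      · exact absurd hx hMt
      · exact h1
    rcases hd : w.dropWhile P with _ | ⟨m, v⟩
    · rw [hd] at h0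
      rw [← h0] at hM
      simp at hM
      exact absurd hM hMt
    · rw [hd] at hh h0
      have : m = M := by simpa [hP] using hh m (by simp)
      subst this
      refine ⟨v, h0.symm, rfl, hsub, ?_⟩
      have hnd : (w.takeWhile P ++ m :: v).Nodup := by rw [h0]; exact hw.1
      have hfs : (w.takeWhile P ++ m :: v).toFinset = insert m S := by rw [h0]; exact hw.2
      rw [List.nodup_append] at hnd
      obtain ⟨h1, h2, h3⟩ := hnd
      rw [List.nodup_cons] at h2
      rw [mem_arr]
      refine ⟨h2.2, ?_⟩
      ext x
      have hx := congrArg (x ∈ ·) hfs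
      simp only [List.mem_toFinset, List.mem_append, List.mem_cons, Finset.mem_insert,
        eq_iff_iff] at hx
      simp only [List.mem_toFinset, Finset.mem_sdiff]
      constructor
      · intro hxv
        have hxm : x ≠ m := by rintro rfl; exact h2.1 hxv
        exact ⟨by tauto, fun hxt => h3 x hxt x (by simp [hxv]) rfl⟩
      · rintro ⟨hxs, hxt⟩
        have hxm : x ≠ m := by rintro rfl; exact hMS hxs
        tauto
  have hbuild : ∀ u v : List ℕ, u.Nodup → u.toFinset ⊆ S → v ∈ arr (S \ u.toFinset) →
      u ++ M :: v ∈ arr (insert M S) ∧ (u ++ M :: v).takeWhile P = u ∧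
        (u ++ M :: v).dropWhile P = M :: v := by
    intro u v hu hus hv
    rw [mem_arr] at hv
    have hvs : ∀ x, x ∈ v ↔ x ∈ S ∧ x ∉ u := by
      intro x; rw [← List.mem_toFinset, hv.2]; simp
    have huS : ∀ x ∈ u, x ∈ S := fun x hx => hus (by simpa using hx)
    refine ⟨?_, ?_⟩
    · rw [mem_arr, List.nodup_append]
      refine ⟨⟨hu, ?_, ?_⟩, ?_⟩
      · rw [List.nodup_cons]
        exact ⟨fun h => hMS ((hvs M).1 h).1, hv.1⟩
      · rintro x hx y hy rfl
        rw [List.mem_cons] at hy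
        rcases hy with rfl | hy
        · exact hMS (huS _ hx)
        · exact ((hvs _).1 hy).2 hx
      · ext x
        simp only [List.mem_toFinset, List.mem_append, List.mem_cons, Finset.mem_insert, hvs]
        have := huS x
        tauto
    · apply takeWhile_append_dropWhile'
      · intro x hx
        have : x ≠ M := by rintro rfl; exact hMS (huS _ hx)
        simp [hP, this]
      · simp [hP]
  rw [E, fiber P (arr (insert M S)) (fun w hw => (mem_arr.1 hw).1) ?_
    (fun u => X ^ des u) (fun v => X ^ des v) ?_]
  · have himg : (arr (insert M S)).image (fun w => (w.takeWhile P).toFinset) = S.powerset := by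
      ext U
      simp only [Finset.mem_image, Finset.mem_powerset]
      constructor
      · rintro ⟨w, hw, rfl⟩
        obtain ⟨v, _, _, h, _⟩ := hstr w hw
        exact h
      · intro hU
        obtain ⟨h1, h2, h3⟩ := hbuild U.toList (S \ U).toList U.nodup_toList (by simpa using hU)
          (by rw [mem_arr]; exact ⟨Finset.nodup_toList _, by simp⟩)
        exact ⟨_, h1, by rw [h2]; simp⟩
    rw [himg]
    refine Finset.sum_congr rfl fun U hU => ?_
    rw [Finset.mem_powerset] at hU
    have hR : ((arr (insert M S)).filter (fun w => (w.takeWhile P).toFinset = U)).image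
        (List.dropWhile P) = (arr (S \ U)).image (List.cons M) := by
      ext v
      simp only [Finset.mem_image, Finset.mem_filter]
      constructor
      · rintro ⟨w, ⟨hw, rfl⟩, rfl⟩
        obtain ⟨v, _, h1, h2, h3⟩ := hstr w hw
        exact ⟨v, h3, h1.symm⟩
      · rintro ⟨v', hv', rfl⟩
        obtain ⟨h1, h2, h3⟩ := hbuild U.toList v' U.nodup_toList (by simpa using hU)
          (by simpa using hv')
        exact ⟨_, ⟨h1, by rw [h2]; simp⟩, h3⟩
    rw [hR, sum_cons_max M _ (fun x hx => hS x (Finset.mem_sdiff.1 hx).1)]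
    rfl
  · intro w hw u hu
    rw [mem_arr] at hw ⊢
    have : (u ++ w.dropWhile P).Perm w := by
      have := hu.append_right (w.dropWhile P)
      rwa [List.takeWhile_append_dropWhile] at this
    exact ⟨this.nodup_iff.2 hw.1, by rw [List.toFinset_eq_of_perm _ _ this, hw.2]⟩
  · intro w hw
    obtain ⟨v, h0, h1, h2, h3⟩ := hstr w hw
    rw [← pow_add, h1, ← des_append_lt _ _ ?_, ← h0]
    intro x hx y hy
    simp at hy
    subst hy
    exact hS x (h2 (by simpa using hx))

lemma E_gam (k : ℕ) : ∀ S : Finset ℕ, S.card = k → S.Nonempty → E S ∈ Gam (k - 1) := by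
  induction k using Nat.strong_induction_on with
  | _ k ih =>
  intro S hk hS
  set M := S.max' hS with hM
  have hins : S = insert M (S.erase M) := (Finset.insert_erase (S.max'_mem hS)).symm
  set S' := S.erase M with hS'
  have hlt : ∀ x ∈ S', x < M := fun x hx => by
    rw [hS', Finset.mem_erase] at hx
    exact lt_of_le_of_ne (S.le_max' x hx.2) hx.1
  have hc : S'.card + 1 = k := by
    rw [← hk, hS', Finset.card_erase_add_one (S.max'_mem hS)]
  rw [hins, E_rec M S' hlt]
  rcases S'.eq_empty_or_nonempty with h0 | h0
  · rw [h0] at hc ⊢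
    simp at hc
    simp [E_empty, ← hc]
    exact gam_one
  · have e1 : ∅ ∈ S'.powerset := by simp
    have e2 : S' ∈ S'.powerset.erase ∅ := by simp [h0.ne_empty]
    have hcp := h0.card_pos
    rw [← Finset.add_sum_erase _ _ e1, ← Finset.add_sum_erase _ _ e2, ← add_assoc]
    refine add_mem ?_ (sum_mem ?_)
    · simp only [Finset.sdiff_empty, h0.ne_empty, if_false, E_empty, Finset.sdiff_self, if_true]
      have : (1 : ℤ[X]) * (X * E S') + E S' * 1 = (1 + X) * E S' := by ring
      rw [this]
      exact gam_mul' gam_one_add_X (ih S'.card (by omega) S' rfl h0) (by omega)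
    · intro U hU
      simp only [Finset.mem_erase, Finset.mem_powerset] at hU
      obtain ⟨hU1, hU2, hU3⟩ := hU
      have hne : (S' \ U) ≠ ∅ := by
        rw [Ne, Finset.sdiff_eq_empty_iff_subset]
        intro h; exact hU1 (Finset.Subset.antisymm hU3 h)
      rw [if_neg hne]
      have hUn := Finset.nonempty_iff_ne_empty.2 hU2
      have hVn := Finset.nonempty_iff_ne_empty.2 hne
      have c1 := hUn.card_pos
      have c2 := hVn.card_pos
      have c3 := Finset.card_sdiff_add_card_eq_card hU3
      refine gam_mul' (ih U.card (by omega) U rfl hUn)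
        (gam_mul gam_X (ih (S' \ U).card (by omega) _ rfl hVn)) (by omega)

lemma block (c N : ℕ) : ∀ (b : Bool) (d : ℕ) (L : Finset (List ℕ)),
    d + 2 = N + b.toNat →
    (∀ w ∈ L, w.length = N ∧ w.Nodup ∧ (∀ x ∈ w.head?, decide (c ≤ x) = b) ∧
      (∀ x ∈ w.getLast?, c ≤ x)) →
    (∀ (b' : Bool) (a u u' v : List ℕ), a ++ (u ++ v) ∈ L → (∀ x ∈ u, decide (c ≤ x) = b') →
      u.Perm u' → a ++ (u' ++ v) ∈ L) →
    1 ≤ N →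
    ∑ w ∈ L, (X : ℤ[X]) ^ des w ∈ Gam d := by
  induction N using Nat.strong_induction_on with
  | _ N ih =>
  intro b d L hd hL hcl hN
  set P : ℕ → Bool := fun x => decide (decide (c ≤ x) = b) with hP
  have htk : ∀ w : List ℕ, ∀ x ∈ w.takeWhile P, decide (c ≤ x) = b := fun w x hx => by
    simpa [hP] using List.mem_takeWhile_imp hx
  have hdr : ∀ w : List ℕ, ∀ x ∈ (w.dropWhile P).head?, decide (c ≤ x) = !b := fun w x hx => by
    have := head_dropWhile w x hx
    simp only [hP, decide_eq_false_iff_not] at this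
    cases b <;> simpa using this
  have hne : ∀ w ∈ L, w.takeWhile P ≠ [] := by
    intro w hw h
    obtain ⟨h1, h2, h3, h4⟩ := hL w hw
    rcases w with _ | ⟨x, w⟩
    · simp at h1; omega
    · have := h3 x (by simp)
      simp [hP, this] at h
  rw [fiber P L (fun w hw => (hL w hw).2.1) ?_
    (fun u => X ^ des u) (fun v => (if v ≠ [] ∧ b = true then X else 1) * X ^ des v) ?_]
  · refine sum_mem fun U hU => ?_
    set R := (L.filter (fun w => (w.takeWhile P).toFinset = U)).image (List.dropWhile P) with hR
    rw [Finset.mem_image] at hU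
    obtain ⟨w₀, hw₀, hU₀⟩ := hU
    have hUne : U.Nonempty := by
      rw [← hU₀, List.toFinset_nonempty_iff]; exact hne w₀ hw₀
    have hlen : ∀ w ∈ L, (w.takeWhile P).toFinset = U →
        U.card + (w.dropWhile P).length = N := by
      intro w hw hU
      rw [← (hL w hw).1, ← hU,
        List.toFinset_card_of_nodup ((hL w hw).2.1.sublist (List.takeWhile_sublist _))]
      rw [← List.length_append, List.takeWhile_append_dropWhile]
    have hlast : ∀ w ∈ L, ∀ x ∈ (w.dropWhile P).getLast?, c ≤ x := by
      intro w hw x hx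
      refine (hL w hw).2.2.2 x ?_
      rw [← List.takeWhile_append_dropWhile (p := P) (l := w), List.getLast?_append]
      rw [Option.mem_def] at hx ⊢
      rw [hx]; simp
    have hEU := E_gam U.card U rfl hUne
    have hUc := hUne.card_pos
    change E U * _ ∈ _
    by_cases hN' : U.card = N
    · -- everything in one block
      have hR1 : R = {[]} := by
        ext v
        rw [hR, Finset.mem_image, Finset.mem_singleton]
        constructor
        · rintro ⟨w, hw, rfl⟩
          rw [Finset.mem_filter] at hw
          have := hlen w hw.1 hw.2
          exact List.eq_nil_of_length_eq_zero (by omega)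
        · rintro rfl
          refine ⟨w₀, by simp [hw₀, hU₀], ?_⟩
          have := hlen w₀ hw₀ hU₀
          exact List.eq_nil_of_length_eq_zero (by omega)
      have hb : b = true := by
        have h1 : w₀.dropWhile P = [] := by
          have := hlen w₀ hw₀ hU₀
          exact List.eq_nil_of_length_eq_zero (by omega)
        have h2 := List.takeWhile_append_dropWhile (p := P) (l := w₀)
        rw [h1, List.append_nil] at h2
        have h3 : w₀ ≠ [] := by rw [← h2]; exact hne w₀ hw₀
        have h4 := htk w₀ (w₀.getLast h3) (by rw [h2]; exact List.getLast_mem h3)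
        have h5 := (hL w₀ hw₀).2.2.2 (w₀.getLast h3) (by simp [List.getLast?_eq_getLast_of_ne_nil h3])
        rw [← h4]; simpa using h5
      subst hb
      rw [hR1]
      simp only [Finset.sum_singleton, des]
      simp at hd
      refine gam_mul' hEU (e := 0) (by simpa using gam_one) (by omega)
    · have hRlen : ∀ v ∈ R, v.length = N - U.card := by
        intro v hv
        rw [hR, Finset.mem_image] at hv
        obtain ⟨w, hw, rfl⟩ := hv
        rw [Finset.mem_filter] at hw
        have := hlen w hw.1 hw.2
        omega
      have hlen₀ := hlen w₀ hw₀ hU₀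
      have hRgood : ∀ v ∈ R, v.length = N - U.card ∧ v.Nodup ∧
          (∀ x ∈ v.head?, decide (c ≤ x) = !b) ∧ (∀ x ∈ v.getLast?, c ≤ x) := by
        intro v hv
        refine ⟨hRlen v hv, ?_⟩
        rw [hR, Finset.mem_image] at hv
        obtain ⟨w, hw, rfl⟩ := hv
        rw [Finset.mem_filter] at hw
        exact ⟨(hL w hw.1).2.1.sublist (List.dropWhile_sublist _), hdr w, hlast w hw.1⟩
      have hRcl : ∀ (b' : Bool) (a u u' v : List ℕ), a ++ (u ++ v) ∈ R →
          (∀ x ∈ u, decide (c ≤ x) = b') → u.Perm u' → a ++ (u' ++ v) ∈ R := by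
        intro b' a u u' v hm hu hp
        rw [hR, Finset.mem_image] at hm ⊢
        obtain ⟨w, hw, hwd⟩ := hm
        rw [Finset.mem_filter] at hw
        have hweq := List.takeWhile_append_dropWhile (p := P) (l := w)
        have h1 : (w.takeWhile P ++ a) ++ (u ++ v) ∈ L := by
          rw [List.append_assoc, ← hwd, hweq]; exact hw.1
        have h2 := hcl b' _ u u' v h1 hu hp
        rw [List.append_assoc] at h2
        have h3 : ∀ x ∈ (a ++ (u' ++ v)).head?, P x = false := by
          intro x hx
          have hh := hdr w
          rw [hwd] at hh
          have : decide (c ≤ x) = !b := by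
            rcases a with _ | ⟨y, a⟩
            · rcases u with _ | ⟨y, u⟩
              · rw [List.nil_perm] at hp
                subst hp; exact hh x hx
              · have hy := hh y (by simp)
                have hy' := hu y (by simp)
                rcases u' with _ | ⟨z, u'⟩
                · simp at hp
                · simp at hx
                  subst hx
                  rw [hu z (hp.mem_iff.2 (by simp)), ← hy', hy]
            · exact hh x (by simpa using hx)
          simp [hP, this]
        have h4 := takeWhile_append_dropWhile' (P := P) (u := w.takeWhile P)
          (fun x hx => List.mem_takeWhile_imp hx) h3
        exact ⟨_, by rw [Finset.mem_filter]; exact ⟨h2, by rw [h4.1]; exact hw.2⟩, h4.2⟩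
      have hRne : ∀ v ∈ R, v ≠ [] := by
        intro v hv h
        have := hRlen v hv
        rw [h] at this
        simp at this; omega
      cases b with
      | false =>
        have := ih (N - U.card) (by omega) true (N - U.card - 1) R (by simp; omega)
          (by simpa using hRgood) hRcl (by omega)
        simp only [Bool.false_eq_true, and_false, if_false, one_mul]
        simp at hd
        exact gam_mul' hEU this (by omega)
      | true =>
        have hge : 2 ≤ N - U.card := by
          by_contra hlt
          have h1 : (w₀.dropWhile P).length = 1 := by omega
          obtain ⟨x, hx⟩ := List.length_eq_one_iff.1 h1
          have h2 := hdr w₀ x (by simp [hx])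
          have h3 := hlast w₀ hw₀ x (by simp [hx])
          simp at h2; omega
        have := ih (N - U.card) (by omega) false (N - U.card - 2) R (by simp; omega)
          (by simpa using hRgood) hRcl (by omega)
        have hs : ∑ v ∈ R, (if v ≠ [] ∧ true = true then (X : ℤ[X]) else 1) * X ^ des v
            = X * ∑ v ∈ R, X ^ des v := by
          rw [Finset.mul_sum]
          refine Finset.sum_congr rfl fun v hv => ?_
          simp [hRne v hv]
        rw [hs]
        simp at hd
        exact gam_mul' hEU (gam_mul gam_X this) (by omega)
  · intro w hw u hu
    have := hcl b [] (w.takeWhile P) u (w.dropWhile P) (by simpa using hw) (htk w) hu.symm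
    simpa using this
  · intro w hw
    have hweq := List.takeWhile_append_dropWhile (p := P) (l := w)
    conv_lhs => rw [← hweq]
    have ht := htk w
    have hh := hdr w
    by_cases hv : w.dropWhile P = []
    · simp [hv, des]
    · cases b with
      | false =>
        rw [des_append_lt]
        · simp [pow_add]
        · intro x hx y hy
          have h1 := ht x hx
          have h2 := hh y hy
          simp at h1 h2; omega
      | true =>
        rw [des_append_gt _ _ (hne w hw) hv]
        · simp [pow_add, hv]; ring
        · intro x hx y hy
          have h1 := ht x hx
          have h2 := hh y hy
          simp at h1 h2; omega

end CrownGamma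

namespace CrownGamma

open Polynomial Finset

lemma cs_val {m : ℕ} (i : Fin m) :
    ((cyclicSucc i : Fin m) : ℕ) = if (i : ℕ) + 1 < m then (i : ℕ) + 1 else 0 := by
  have := i.isLt
  simp only [cyclicSucc]
  split_ifs with h
  · exact Nat.mod_eq_of_lt h
  · have : (i : ℕ) + 1 = m := by omega
    rw [this, Nat.mod_self]

lemma cs_parity {n : ℕ} (i : Fin (2 * n)) :
    ((cyclicSucc i : Fin (2 * n)) : ℕ) % 2 = 1 - (i : ℕ) % 2 := by
  have := i.isLt
  rw [cs_val]; split_ifs <;> omega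

/-- The covering relations of the crown. -/
def rel {n : ℕ} (i j : Fin (2 * n)) : Prop :=
  (i : ℕ) % 2 = 0 ∧ (j = cyclicSucc i ∨ i = cyclicSucc j)

lemma rel_odd {n : ℕ} {i j : Fin (2 * n)} (h : rel i j) : (j : ℕ) % 2 = 1 := by
  obtain ⟨h0, h | h⟩ := h
  · have := cs_parity i; rw [h]; omega
  · have := cs_parity j; rw [← h] at this; omega

lemma cap_iff {n : ℕ} (σ : Equiv.Perm (Fin (2 * n))) :
    IsCAP σ ↔ ∀ i j, rel i j → σ i < σ j := by
  constructor
  · intro h i j hr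
    have ho := rel_odd hr
    obtain ⟨h0, rfl | rfl⟩ := hr
    · exact (h i).1 (Nat.even_iff.2 h0)
    · exact (h j).2 (Nat.odd_iff.2 ho)
  · intro h i
    refine ⟨fun he => h _ _ ⟨Nat.even_iff.1 he, Or.inl rfl⟩, fun ho => h _ _ ⟨?_, Or.inr rfl⟩⟩
    have := cs_parity i
    rw [Nat.odd_iff] at ho; omega

/-- Adjacent values. -/
def adj {m : ℕ} (a b : Fin m) : Prop := (a : ℕ) + 1 = b ∨ (b : ℕ) + 1 = a

lemma cap_swap {n : ℕ} {σ : Equiv.Perm (Fin (2 * n))} (hσ : IsCAP σ) {x y : Fin (2 * n)}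
    (hxy : ¬ rel x y) (hyx : ¬ rel y x) (ha : adj (σ x) (σ y)) :
    IsCAP (σ * Equiv.swap x y) := by
  rw [cap_iff] at hσ ⊢
  intro i j hr
  have hlt := hσ i j hr
  have hinj : ∀ a b, (σ a : ℕ) = σ b → a = b := fun a b h => σ.injective (Fin.ext h)
  simp only [Equiv.Perm.mul_apply]
  rw [Fin.lt_def] at hlt ⊢
  unfold adj at ha
  by_cases hix : i = x
  · subst hix
    have hj1 : j ≠ y := by rintro rfl; exact hxy hr
    have hj2 : j ≠ i := by rintro rfl; omega
    rw [Equiv.swap_apply_left, Equiv.swap_apply_of_ne_of_ne hj2 hj1]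
    have := mt (hinj j y) hj1
    omega
  · by_cases hiy : i = y
    · subst hiy
      have hj1 : j ≠ x := by rintro rfl; exact hyx hr
      have hj2 : j ≠ i := by rintro rfl; omega
      rw [Equiv.swap_apply_right, Equiv.swap_apply_of_ne_of_ne hj1 hj2]
      have := mt (hinj j x) hj1
      omega
    · rw [Equiv.swap_apply_of_ne_of_ne hix hiy]
      have h1 := mt (hinj i x) hix
      have h2 := mt (hinj i y) hiy
      by_cases hjx : j = x
      · subst hjx; rw [Equiv.swap_apply_left]; omega
      · by_cases hjy : j = y
        · subst hjy; rw [Equiv.swap_apply_right]; omega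
        · rw [Equiv.swap_apply_of_ne_of_ne hjx hjy]; omega

/-- Descents of the inverse word of `σ` relabelled by `ℓ`. -/
def desP {n : ℕ} (ℓ σ : Equiv.Perm (Fin (2 * n))) : ℕ :=
  (Finset.univ.filter (fun k : Fin (2 * n) => (k : ℕ) + 1 < 2 * n ∧
    ℓ (σ⁻¹ (cyclicSucc k)) < ℓ (σ⁻¹ k))).card

open Classical in
/-- Generating function. -/
noncomputable def D {n : ℕ} (ℓ : Equiv.Perm (Fin (2 * n))) : ℤ[X] :=
  ∑ σ ∈ Finset.univ.filter (fun σ : Equiv.Perm (Fin (2 * n)) => IsCAP σ), X ^ desP ℓ σ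

lemma desP_swap {n : ℕ} (ℓ σ : Equiv.Perm (Fin (2 * n))) (x y : Fin (2 * n)) :
    desP (ℓ * Equiv.swap x y) σ = desP ℓ (σ * Equiv.swap x y) := by
  unfold desP
  congr 1

lemma desP_nonadj {n : ℕ} (ℓ σ : Equiv.Perm (Fin (2 * n))) (x y : Fin (2 * n))
    (hl : adj (ℓ x) (ℓ y)) (h : ¬ adj (σ x) (σ y)) :
    desP (ℓ * Equiv.swap x y) σ = desP ℓ σ := by
  unfold desP
  congr 1
  refine Finset.filter_congr fun k _ => and_congr_right fun hk => ?_
  obtain ⟨i, hi⟩ : ∃ i, i = σ⁻¹ k := ⟨_, rfl⟩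
  obtain ⟨j, hj⟩ : ∃ j, j = σ⁻¹ (cyclicSucc k) := ⟨_, rfl⟩
  rw [← hi, ← hj]
  have hi' : σ i = k := by rw [hi]; simp
  have hj' : (σ j : ℕ) = k + 1 := by rw [hj]; simp [cs_val, hk]
  have hinj : ∀ a b, (ℓ a : ℕ) = ℓ b → a = b := fun a b h => ℓ.injective (Fin.ext h)
  have hij : i ≠ j := by rintro rfl; rw [hi'] at hj'; omega
  have hn1 : ¬ (i = x ∧ j = y) := by
    rintro ⟨rfl, rfl⟩; apply h; left; rw [hj', hi']
  have hn2 : ¬ (i = y ∧ j = x) := by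
    rintro ⟨rfl, rfl⟩; apply h; right; rw [hj', hi']
  simp only [Equiv.Perm.mul_apply, Fin.lt_def]
  unfold adj at hl
  by_cases hix : i = x
  · subst hix
    have hj1 : j ≠ y := fun h => hn1 ⟨rfl, h⟩
    rw [Equiv.swap_apply_left, Equiv.swap_apply_of_ne_of_ne hij.symm hj1]
    have := mt (hinj j y) hj1
    have := mt (hinj j i) hij.symm
    omega
  · by_cases hiy : i = y
    · subst hiy
      have hj1 : j ≠ x := fun h => hn2 ⟨rfl, h⟩
      rw [Equiv.swap_apply_right, Equiv.swap_apply_of_ne_of_ne hj1 hij.symm]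
      have := mt (hinj j x) hj1
      have := mt (hinj j i) hij.symm
      omega
    · rw [Equiv.swap_apply_of_ne_of_ne hix hiy]
      have h1 := mt (hinj i x) hix
      have h2 := mt (hinj i y) hiy
      by_cases hjx : j = x
      · subst hjx; rw [Equiv.swap_apply_left]; omega
      · by_cases hjy : j = y
        · subst hjy; rw [Equiv.swap_apply_right]; omega
        · rw [Equiv.swap_apply_of_ne_of_ne hjx hjy]

lemma D_swap {n : ℕ} (ℓ : Equiv.Perm (Fin (2 * n))) (x y : Fin (2 * n))
    (hxy : ¬ rel x y) (hyx : ¬ rel y x) (hl : adj (ℓ x) (ℓ y)) :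
    D (ℓ * Equiv.swap x y) = D ℓ := by
  classical
  let φ : Equiv.Perm (Fin (2 * n)) → Equiv.Perm (Fin (2 * n)) :=
    fun σ => if adj (σ x) (σ y) then σ * Equiv.swap x y else σ
  have hφφ : ∀ σ, φ (φ σ) = σ := by
    intro σ
    by_cases h : adj (σ x) (σ y)
    · have h' : adj ((σ * Equiv.swap x y) x) ((σ * Equiv.swap x y) y) := by
        simp only [Equiv.Perm.mul_apply, Equiv.swap_apply_left, Equiv.swap_apply_right]
        exact h.symm
      simp only [φ, if_pos h, if_pos h']
      rw [mul_assoc, Equiv.swap_mul_self, mul_one]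
    · simp only [φ, if_neg h]
  have hφm : ∀ σ, IsCAP σ → IsCAP (φ σ) := by
    intro σ hσ
    by_cases h : adj (σ x) (σ y)
    · simp only [φ, if_pos h]; exact cap_swap hσ hxy hyx h
    · simp only [φ, if_neg h]; exact hσ
  unfold D
  refine Finset.sum_bij' (fun σ _ => φ σ) (fun σ _ => φ σ) ?_ ?_ ?_ ?_ ?_
  · intro σ hσ; simp only [Finset.mem_filter, Finset.mem_univ, true_and] at hσ ⊢; exact hφm σ hσ
  · intro σ hσ; simp only [Finset.mem_filter, Finset.mem_univ, true_and] at hσ ⊢; exact hφm σ hσ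
  · intro σ _; exact hφφ σ
  · intro σ _; exact hφφ σ
  · intro σ _
    congr 1
    by_cases h : adj (σ x) (σ y)
    · simp only [φ, if_pos h]; exact desP_swap ℓ σ x y
    · simp only [φ, if_neg h]; exact desP_nonadj ℓ σ x y hl h

lemma des_eq_card (l : List ℕ) :
    des l = ((Finset.range (l.length - 1)).filter
      (fun k => l.getD (k + 1) 0 < l.getD k 0)).card := by
  induction l with
  | nil => simp [des]
  | cons a l ih =>
    rcases l with _ | ⟨b, l⟩
    · simp [des]
    · rw [des, ih]
      simp only [List.length_cons, Nat.add_sub_cancel]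
      rw [Finset.card_filter, Finset.card_filter, Finset.sum_range_succ']
      simp
      omega

/-- The word of `σ` relabelled by `ℓ`. -/
def word {n : ℕ} (ℓ σ : Equiv.Perm (Fin (2 * n))) : List ℕ :=
  List.ofFn (fun k => (ℓ (σ⁻¹ k) : ℕ))

lemma word_len {n : ℕ} (ℓ σ : Equiv.Perm (Fin (2 * n))) : (word ℓ σ).length = 2 * n := by
  simp [word]

lemma word_get {n : ℕ} (ℓ σ : Equiv.Perm (Fin (2 * n))) (k : ℕ) (hk : k < (word ℓ σ).length) :
    (word ℓ σ)[k] = (ℓ (σ⁻¹ ⟨k, by simpa [word] using hk⟩) : ℕ) := by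
  simp [word]

lemma des_word {n : ℕ} (ℓ σ : Equiv.Perm (Fin (2 * n))) : des (word ℓ σ) = desP ℓ σ := by
  rw [des_eq_card, desP]
  symm
  have hl := word_len ℓ σ
  refine Finset.card_bij (fun k _ => (k : ℕ)) ?_ ?_ ?_
  · intro k hk
    simp only [Finset.mem_filter, Finset.mem_univ, true_and] at hk
    obtain ⟨h1, h2⟩ := hk
    simp only [Finset.mem_filter, Finset.mem_range]
    refine ⟨by omega, ?_⟩
    rw [List.getD_eq_getElem _ _ (by omega), List.getD_eq_getElem _ _ (by omega), word_get,
      word_get]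
    have : cyclicSucc k = ⟨(k : ℕ) + 1, h1⟩ := by ext; rw [cs_val, if_pos h1]
    rw [this] at h2
    exact h2
  · intro a _ b _ h; exact Fin.ext h
  · intro k hk
    simp only [Finset.mem_filter, Finset.mem_range] at hk
    obtain ⟨h1, h2⟩ := hk
    have h3 : k + 1 < 2 * n := by omega
    refine ⟨⟨k, by omega⟩, ?_, rfl⟩
    rw [List.getD_eq_getElem _ _ (by omega), List.getD_eq_getElem _ _ (by omega), word_get,
      word_get] at h2
    simp only [Finset.mem_filter, Finset.mem_univ, true_and]
    refine ⟨h3, ?_⟩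
    have : cyclicSucc (⟨k, by omega⟩ : Fin (2 * n)) = ⟨k + 1, h3⟩ := by
      ext; rw [cs_val, if_pos h3]
    rw [this]
    exact h2

lemma word_inj {n : ℕ} (ℓ : Equiv.Perm (Fin (2 * n))) : Function.Injective (word ℓ) := by
  intro σ τ h
  have h := List.ofFn_injective h
  have : σ⁻¹ = τ⁻¹ := by
    ext k
    have := congrFun h k
    exact congrArg Fin.val (ℓ.injective (Fin.ext this))
  exact inv_injective this

lemma word_nodup {n : ℕ} (ℓ σ : Equiv.Perm (Fin (2 * n))) : (word ℓ σ).Nodup := by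
  rw [word, List.nodup_ofFn]
  intro a b h
  exact (σ⁻¹).injective (ℓ.injective (Fin.ext h))

lemma perm_closure (L : Finset (List ℕ)) (Q : ℕ → Prop)
    (h : ∀ a x y v, Q x → Q y → a ++ (x :: y :: v) ∈ L → a ++ (y :: x :: v) ∈ L)
    {u u' : List ℕ} (hp : u.Perm u') : ∀ a v, (∀ x ∈ u, Q x) → a ++ (u ++ v) ∈ L →
      a ++ (u' ++ v) ∈ L := by
  induction hp with
  | nil => intro a v _ h; exact h
  | cons x hp ih =>
    intro a v hQ hm
    have := ih (a ++ [x]) v (fun y hy => hQ y (by simp [hy])) (by simpa using hm)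
    simpa using this
  | swap x y l =>
    intro a v hQ hm
    exact h a y x (l ++ v) (hQ y (by simp)) (hQ x (by simp)) (by simpa using hm)
  | trans h1 h2 ih1 ih2 =>
    intro a v hQ hm
    exact ih2 a v (fun x hx => hQ x (h1.mem_iff.2 hx)) (ih1 a v hQ hm)

lemma swap_closure {n : ℕ} (ℓ σ : Equiv.Perm (Fin (2 * n))) (hσ : IsCAP σ) (c : ℕ)
    (hc : ∀ i, c ≤ (ℓ i : ℕ) ↔ (i : ℕ) % 2 = 1) (a v : List ℕ) (x y : ℕ)
    (hxy : c ≤ x ↔ c ≤ y) (hw : word ℓ σ = a ++ (x :: y :: v)) :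
    ∃ τ, IsCAP τ ∧ word ℓ τ = a ++ (y :: x :: v) := by
  have hl := word_len ℓ σ
  have hl' := hl
  rw [hw] at hl'
  simp only [List.length_append, List.length_cons] at hl'
  have hk1 : a.length + 1 < 2 * n := by omega
  have hk : a.length < 2 * n := by omega
  obtain ⟨i, hi⟩ : ∃ i, i = σ⁻¹ ⟨a.length, hk⟩ := ⟨_, rfl⟩
  obtain ⟨j, hj⟩ : ∃ j, j = σ⁻¹ ⟨a.length + 1, hk1⟩ := ⟨_, rfl⟩
  have hx : (ℓ i : ℕ) = x := by
    have := word_get ℓ σ a.length (by omega)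
    rw [hi, ← this]; simp [hw]
  have hy : (ℓ j : ℕ) = y := by
    have := word_get ℓ σ (a.length + 1) (by omega)
    rw [hj, ← this]; simp [hw]
  have hi' : σ i = ⟨a.length, hk⟩ := by rw [hi]; simp
  have hj' : σ j = ⟨a.length + 1, hk1⟩ := by rw [hj]; simp
  have hpar : (i : ℕ) % 2 = 1 ↔ (j : ℕ) % 2 = 1 := by rw [← hc, ← hc, hx, hy, hxy]
  refine ⟨σ * Equiv.swap i j, cap_swap hσ ?_ ?_ ?_, ?_⟩
  · intro h; have := rel_odd h; have := h.1; omega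
  · intro h; have := rel_odd h; have := h.1; omega
  · left; rw [hi', hj']
  · apply List.ext_getElem
    · rw [word_len]; simp; omega
    · intro k h1 h2
      have h1' : k < 2 * n := by rwa [word_len] at h1
      rw [word_get]
      simp only [mul_inv_rev, Equiv.swap_inv, Equiv.Perm.mul_apply]
      rcases lt_trichotomy k a.length with h | h | h
      · rw [Equiv.swap_apply_of_ne_of_ne, ← word_get ℓ σ k (by omega)]
        · simp [hw, List.getElem_append_left h]
        · intro h'; replace h' := h'.trans hi
          have := congrArg Fin.val ((σ⁻¹).injective h'); simp at this; omega
        · intro h'; replace h' := h'.trans hj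
          have := congrArg Fin.val ((σ⁻¹).injective h'); simp at this; omega
      · subst h
        rw [← hi, Equiv.swap_apply_left, hy]
        simp
      · rcases Nat.lt_or_ge (a.length + 1) k with h' | h'
        · rw [Equiv.swap_apply_of_ne_of_ne, ← word_get ℓ σ k (by omega)]
          · obtain ⟨m, rfl⟩ : ∃ m, k = a.length + (m + 2) := ⟨k - a.length - 2, by omega⟩
            simp only [hw]
            rw [List.getElem_append_right (by omega), List.getElem_append_right (by omega)]
            simp
          · intro h'; replace h' := h'.trans hi
            have := congrArg Fin.val ((σ⁻¹).injective h'); simp at this; omega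
          · intro h'; replace h' := h'.trans hj
            have := congrArg Fin.val ((σ⁻¹).injective h'); simp at this; omega
        · obtain rfl : k = a.length + 1 := by omega
          rw [← hj, Equiv.swap_apply_right, hx]
          simp

lemma D_sorted {n : ℕ} (hn : 1 ≤ n) (ℓ : Equiv.Perm (Fin (2 * n))) (c : ℕ)
    (hc : ∀ i, c ≤ (ℓ i : ℕ) ↔ (i : ℕ) % 2 = 1) : D ℓ ∈ Gam (2 * n - 2) := by
  classical
  set L := (Finset.univ.filter (fun σ : Equiv.Perm (Fin (2 * n)) => IsCAP σ)).image (word ℓ)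
    with hL
  have hD : D ℓ = ∑ w ∈ L, (X : ℤ[X]) ^ des w := by
    rw [hL, Finset.sum_image (fun a _ b _ h => word_inj ℓ h), D]
    refine Finset.sum_congr ?_ fun σ _ => by rw [des_word]
    ext; simp
  have hmem : ∀ w, w ∈ L ↔ ∃ σ, IsCAP σ ∧ word ℓ σ = w := by
    intro w; simp [hL]
  rw [hD]
  refine block c (2 * n) false (2 * n - 2) L (by simp; omega) ?_ ?_ (by omega)
  · intro w hw
    obtain ⟨σ, hσ, rfl⟩ := (hmem w).1 hw
    have hl := word_len ℓ σ
    refine ⟨hl, word_nodup ℓ σ, ?_, ?_⟩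
    · intro x hx
      rw [List.head?_eq_getElem?, List.getElem?_eq_getElem (by omega), word_get] at hx
      simp only [Option.mem_def, Option.some.injEq] at hx
      rw [← hx, decide_eq_false_iff_not, hc]
      intro ho
      obtain ⟨i, hi⟩ : ∃ i, i = σ⁻¹ ⟨0, by omega⟩ := ⟨_, rfl⟩
      rw [← hi] at ho
      have := (hσ i).2 (Nat.odd_iff.2 ho)
      have h0 : σ i = ⟨0, by omega⟩ := by rw [hi]; simp
      rw [h0, Fin.lt_def] at this
      simp at this
    · intro x hx
      rw [List.getLast?_eq_getElem?, List.getElem?_eq_getElem (by omega), word_get] at hx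
      simp only [Option.mem_def, Option.some.injEq] at hx
      rw [← hx, hc]
      by_contra ho
      obtain ⟨i, hi⟩ : ∃ i, i = σ⁻¹ ⟨(word ℓ σ).length - 1, by omega⟩ := ⟨_, rfl⟩
      rw [← hi] at ho
      have := (hσ i).1 (Nat.even_iff.2 (by omega))
      have h0 : (σ i : ℕ) = (word ℓ σ).length - 1 := by rw [hi]; simp
      rw [Fin.lt_def, h0] at this
      have := (σ (cyclicSucc i)).isLt
      omega
  · intro b a u u' v hm hu hp
    refine perm_closure L (fun x => decide (c ≤ x) = b) ?_ hp a v hu hm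
    intro a x y v hx hy hm
    obtain ⟨σ, hσ, hw⟩ := (hmem _).1 hm
    obtain ⟨τ, hτ, hw'⟩ := swap_closure ℓ σ hσ c hc a v x y
      (by have := hx.trans hy.symm; simpa using this) hw
    exact (hmem _).2 ⟨τ, hτ, hw'⟩

lemma D_gam {n : ℕ} (hn : 1 ≤ n) (s : ℕ) : ∀ ℓ : Equiv.Perm (Fin (2 * n)), IsCAP ℓ →
    ∑ i ∈ Finset.univ.filter (fun i : Fin (2 * n) => (i : ℕ) % 2 = 0), (ℓ i : ℕ) = s →
    D ℓ ∈ Gam (2 * n - 2) := by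
  induction s using Nat.strong_induction_on with
  | _ s ih =>
  intro ℓ hℓ hs
  by_cases hex : ∃ x y : Fin (2 * n), (x : ℕ) % 2 = 1 ∧ (y : ℕ) % 2 = 0 ∧ (ℓ x : ℕ) + 1 = ℓ y
  · obtain ⟨x, y, hx, hy, hxy⟩ := hex
    have h1 : ¬ rel x y := fun h => by have := h.1; omega
    have h2 : ¬ rel y x := fun h => by
      have := (cap_iff ℓ).1 hℓ y x h
      rw [Fin.lt_def] at this; omega
    have ha : adj (ℓ x) (ℓ y) := Or.inl hxy
    rw [← D_swap ℓ x y h1 h2 ha]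
    refine ih _ ?_ _ (cap_swap hℓ h1 h2 ha) rfl
    rw [← hs]
    refine Finset.sum_lt_sum ?_ ⟨y, by simp [hy], ?_⟩
    · intro i hi
      simp only [Finset.mem_filter, Finset.mem_univ, true_and] at hi
      have hix : i ≠ x := by rintro rfl; omega
      simp only [Equiv.Perm.mul_apply]
      by_cases hiy : i = y
      · subst hiy; rw [Equiv.swap_apply_right]; omega
      · rw [Equiv.swap_apply_of_ne_of_ne hix hiy]
    · simp only [Equiv.Perm.mul_apply, Equiv.swap_apply_right]; omega
  · push Not at hex
    have hstep : ∀ m a : ℕ, ∀ x y : Fin (2 * n), (ℓ x : ℕ) = a → (ℓ y : ℕ) = a + m →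
        (x : ℕ) % 2 = 1 → (y : ℕ) % 2 = 1 := by
      intro m
      induction m with
      | zero =>
        intro a x y hx hy h
        have : y = x := ℓ.injective (Fin.ext (by omega))
        rw [this]; exact h
      | succ m ihm =>
        intro a x y hx hy h
        have hlt : a + m < 2 * n := by have := (ℓ y).isLt; omega
        have hz : (ℓ (ℓ⁻¹ ⟨a + m, hlt⟩) : ℕ) = a + m := by simp
        have h3 := ihm a x _ hx hz h
        by_contra h4
        exact hex _ y h3 (by omega) (by omega)
    have hne : ∃ a, ∃ x : Fin (2 * n), (ℓ x : ℕ) = a ∧ (x : ℕ) % 2 = 1 :=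
      ⟨_, ⟨1, by omega⟩, rfl, by simp⟩
    classical
    refine D_sorted hn ℓ (Nat.find hne) fun i => ⟨fun h => ?_, fun h => ?_⟩
    · obtain ⟨x, hx1, hx2⟩ := Nat.find_spec hne
      exact hstep ((ℓ i : ℕ) - Nat.find hne) _ x i hx1 (by omega) hx2
    · exact Nat.find_min' hne ⟨i, rfl, h⟩

/-- The initial labelling as a function on naturals. -/
def lab (n i : ℕ) : ℕ :=
  if i = 0 then 0 else if i + 1 = 2 * n then i else if i % 2 = 0 then i - 1 else i + 1

lemma lab_lt {n i : ℕ} (h : i < 2 * n) : lab n i < 2 * n := by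
  unfold lab; split_ifs <;> omega

lemma lab_lab {n i : ℕ} (h : i < 2 * n) : lab n (lab n i) = i := by
  obtain ⟨j, hj⟩ : ∃ j, j = lab n i := ⟨_, rfl⟩
  rw [← hj]
  unfold lab at *
  split_ifs at hj ⊢ <;> omega

/-- The initial labelling. -/
def lab0 (n : ℕ) : Equiv.Perm (Fin (2 * n)) where
  toFun i := ⟨lab n i, lab_lt i.isLt⟩
  invFun i := ⟨lab n i, lab_lt i.isLt⟩
  left_inv i := Fin.ext (lab_lab i.isLt)
  right_inv i := Fin.ext (lab_lab i.isLt)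

lemma lab0_val {n : ℕ} (i : Fin (2 * n)) : (lab0 n i : ℕ) = lab n i := rfl

lemma lab0_cap {n : ℕ} : IsCAP (lab0 n) := by
  intro i
  have := i.isLt
  rw [Nat.even_iff, Nat.odd_iff, Fin.lt_def, Fin.lt_def, lab0_val, lab0_val]
  have hj := cs_val i
  generalize ((cyclicSucc i : Fin (2 * n)) : ℕ) = j at *
  generalize (i : ℕ) = p at *
  unfold lab
  constructor <;> intro h <;> split_ifs at hj ⊢ <;> omega

lemma cswap_eq {n : ℕ} {σ : Equiv.Perm (Fin (2 * n))} (hσ : IsCAP σ) :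
    cswap σ = desP (lab0 n) σ := by
  rw [cswap, desP, ← Set.ncard_coe_finset]
  congr 1
  ext k
  simp only [CSwapSet, Set.mem_ofPred_eq, Finset.coe_filter, Finset.mem_univ, true_and]
  refine and_congr_right fun hk => ?_
  obtain ⟨i, hi⟩ : ∃ i, i = σ⁻¹ k := ⟨_, rfl⟩
  obtain ⟨j, hj⟩ : ∃ j, j = σ⁻¹ (cyclicSucc k) := ⟨_, rfl⟩
  rw [← hi, ← hj]
  have hi' : σ i = k := by rw [hi]; simp
  have hj' : (σ j : ℕ) = k + 1 := by rw [hj]; simp [cs_val, hk]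
  have hij : (i : ℕ) ≠ j := by
    intro h; have := Fin.ext h; subst this; rw [hi'] at hj'; omega
  have hr : ¬ rel j i := fun h => by
    have := (cap_iff σ).1 hσ j i h
    rw [Fin.lt_def, hi'] at this; omega
  unfold rel at hr
  rw [Fin.ext_iff, Fin.ext_iff, cs_val, cs_val] at hr
  have h1 := i.isLt
  have h2 := j.isLt
  rw [Fin.lt_def, lab0_val, lab0_val]
  generalize (i : ℕ) = p at *
  generalize (j : ℕ) = q at *
  unfold lab
  split_ifs at hr ⊢ <;> omega

end CrownGamma

open Polynomial in
open Classical in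
/-- Theorem 5.25 (γ-nonnegativity): there are nonnegative integers `γ_j` with
`Σ_{σ ∈ CA_{2n}} t^{cswap(σ)} = Σ_{j=0}^{n−1} γ_j t^j (1+t)^{2n−2−2j}`. -/
theorem hstar_gamma_nonneg (n : ℕ) (hn : 1 ≤ n) :
    ∃ γ : ℕ → ℕ,
      ∑ σ ∈ Finset.univ.filter (fun σ : Equiv.Perm (Fin (2 * n)) => IsCAP σ),
          (X : Polynomial ℤ) ^ cswap σ
        = ∑ j ∈ Finset.range n, (γ j : Polynomial ℤ) * X ^ j * (1 + X) ^ (2 * n - 2 - 2 * j) := by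
  apply CrownGamma.gam_exists hn
  have h := CrownGamma.D_gam hn _ (CrownGamma.lab0 n) CrownGamma.lab0_cap rfl
  unfold CrownGamma.D at h
  convert h using 1
  refine Finset.sum_congr rfl fun σ hσ => ?_
  rw [CrownGamma.cswap_eq (Finset.mem_filter.1 hσ).2]
end

section
/- Let n ≥ 2. Let p ∈ ℚ[t] be the order polynomial of the crown poset C_{2n} (the unique polynomial with p(m) = Ω_{C_{2n}}(m) for all integers m ≥ 1) and for each odd k ≥ 1 let q_k ∈ ℚ[t] be the order polynomial of the zigzag poset Z_k. Then the following identity holds in ℚ[t]: p(t) = p(−t) − n · q_{2n−1}(−t) + t · q_{2n−3}(t) − Σ_{1 ≤ i < j ≤ n, (i,j) ≠ (1,n)} q_{2(n−j+i)−1}(−t) · q_{2(j−i)−1}(t). -/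
/-- Cover relations of the crown poset `C_{2n}` on `{1,…,2n}`:
`2i−1 ≺ 2i` for `1 ≤ i ≤ n`, `2i+1 ≺ 2i` for `1 ≤ i ≤ n−1`, and `1 ≺ 2n`. -/
def crownCover (n x y : ℕ) : Prop :=
  Odd x ∧ Even y ∧ (y = x + 1 ∨ x = y + 1 ∨ (x = 1 ∧ y = 2 * n))

/-- The order relation of the crown poset `C_{2n}` (restricted to `{1,…,2n}`). -/
def crownLe (n x y : ℕ) : Prop := x = y ∨ crownCover n x y

/-- The ground set `{1,…,2n}` of the crown poset. -/
def crownGround (n : ℕ) : Finset ℕ := Finset.Icc 1 (2 * n)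

/-- Cover relations of the zigzag poset: `2i−1 ≺ 2i` and `2i+1 ≺ 2i`. -/
def zigCover (x y : ℕ) : Prop :=
  Odd x ∧ Even y ∧ (y = x + 1 ∨ x = y + 1)

/-- The order relation of the zigzag poset `Z_k` (restricted to `{1,…,k}`). -/
def zigLe (x y : ℕ) : Prop := x = y ∨ zigCover x y

/-- The number of order-preserving maps from the poset with ground set `s` and
order relation `le` to the chain `{1,…,m}` (a map is recorded as a function
`ℕ → ℕ` vanishing outside `s`). -/
noncomputable def omegaOn (s : Finset ℕ) (le : ℕ → ℕ → Prop) (m : ℕ) : ℕ :=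
  Set.ncard {f : ℕ → ℕ |
    (∀ x, x ∉ s → f x = 0) ∧ (∀ x ∈ s, f x ∈ Finset.Icc 1 m) ∧
    ∀ x ∈ s, ∀ y ∈ s, le x y → f x ≤ f y}

/-- The order polynomial value `Ω_{C_{2n}}(m)`. -/
noncomputable def omegaCrown (n m : ℕ) : ℕ := omegaOn (crownGround n) (crownLe n) m

/-- The order polynomial value `Ω_{Z_k}(m)`. -/
noncomputable def omegaZig (k m : ℕ) : ℕ := omegaOn (Finset.Icc 1 k) zigLe m


open Finset Matrix

def cwU (m : ℕ) : Matrix (Fin m) (Fin m) ℚ := fun a c => if a ≤ c then 1 else 0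
def cwM (m : ℕ) : Matrix (Fin m) (Fin m) ℚ := cwU m * (cwU m)ᵀ
def cwJ (m : ℕ) : Matrix (Fin m) (Fin m) ℚ := fun _ _ => 1
def cwL (m : ℕ) : Matrix (Fin m) (Fin m) ℚ := cwM m - cwJ m
def cwtot {m : ℕ} (A : Matrix (Fin m) (Fin m) ℚ) : ℚ := ∑ i, ∑ j, A i j

lemma cwtot_add {m : ℕ} (A B : Matrix (Fin m) (Fin m) ℚ) : cwtot (A + B) = cwtot A + cwtot B := by
  simp [cwtot, Finset.sum_add_distrib]

lemma cwtot_mul {m : ℕ} (A B : Matrix (Fin m) (Fin m) ℚ) :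
    cwtot (A * cwJ m * B) = cwtot A * cwtot B := by
  simp only [cwtot, Matrix.mul_apply, cwJ, mul_one]
  rw [Finset.sum_mul]
  refine Finset.sum_congr rfl fun i _ => ?_
  rw [Finset.sum_comm, Finset.mul_sum]
  refine Finset.sum_congr rfl fun j _ => ?_
  rw [Finset.mul_sum]

lemma cwtr {m : ℕ} (A B : Matrix (Fin m) (Fin m) ℚ) :
    Matrix.trace (A * cwJ m * B) = cwtot (B * A) := by
  rw [Matrix.trace_mul_comm, ← Matrix.mul_assoc]
  simp [cwtot, Matrix.mul_apply, cwJ, Matrix.trace]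

def cws (m b a : ℕ) : ℚ := cwtot (cwL m ^ b * cwM m ^ a)
def cwr (m b : ℕ) : ℚ := cwtot (cwL m ^ b)
def cwg (m b : ℕ) : ℚ := cwtot (cwM m ^ b)

lemma cws_succ (m b a : ℕ) : cws m b (a+1) = cws m (b+1) a + cwr m b * cwg m a := by
  have : cwL m ^ b * cwM m ^ (a+1) = cwL m ^ (b+1) * cwM m ^ a + cwL m ^ b * cwJ m * cwM m ^ a := by
    have h : cwM m = cwL m + cwJ m := by simp [cwL]
    rw [pow_succ' (cwM m), pow_succ]
    nth_rw 1 [h]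
    noncomm_ring
  rw [cws, this, cwtot_add, cwtot_mul]; rfl

lemma cwg_expand (m k N : ℕ) (h : N ≤ k) :
    cwg m k = cws m N (k - N) + ∑ b ∈ range N, cwr m b * cwg m (k-1-b) := by
  induction N with
  | zero => simp [cwg, cws]
  | succ N ih =>
    rw [ih (by omega), sum_range_succ, show k - N = (k - (N+1)) + 1 by omega, cws_succ,
      show k - 1 - N = k - (N+1) by omega]
    ring

lemma cwT_expand (m k N : ℕ) (h : N ≤ k) :
    ∑ b ∈ range N, cws m b (k-b) = N * cws m N (k - N) +
      ∑ b ∈ range N, (b+1) * (cwr m b * cwg m (k-1-b)) := by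
  induction N with
  | zero => simp
  | succ N ih =>
    rw [sum_range_succ, sum_range_succ, ih (by omega), show k - N = (k - (N+1)) + 1 by omega, cws_succ,
      show k - 1 - N = k - (N+1) by omega]
    push_cast
    ring

lemma cwtrace_diff (m k : ℕ) : Matrix.trace (cwM m ^ (k+1)) - Matrix.trace (cwL m ^ (k+1)) =
    ∑ b ∈ range (k+1), cws m b (k-b) := by
  have key : ∀ N ≤ k + 1, Matrix.trace (cwM m ^ (k+1)) =
      Matrix.trace (cwM m ^ (k+1-N) * cwL m ^ N) + ∑ b ∈ range N, cws m b (k-b) := by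
    intro N hN
    induction N with
    | zero => simp
    | succ N ih =>
      rw [ih (by omega), sum_range_succ]
      have : cwM m ^ (k+1-N) * cwL m ^ N = cwM m ^ (k+1-(N+1)) * cwL m ^ (N+1)
          + cwM m ^ (k - N) * cwJ m * cwL m ^ N := by
        have h : cwM m = cwL m + cwJ m := by simp [cwL]
        rw [show k + 1 - N = (k - N) + 1 by omega, show k + 1 - (N+1) = k - N by omega,
          pow_succ (cwM m), pow_succ' (cwL m)]
        nth_rw 2 [h]
        noncomm_ring
      rw [this, Matrix.trace_add, cwtr]
      simp only [cws]
      ring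
  have := key (k+1) le_rfl
  simp at this
  rw [this]; ring

lemma cwtrace_formula (m k : ℕ) : Matrix.trace (cwM m ^ (k+1)) - Matrix.trace (cwL m ^ (k+1)) =
    (k+1) * cwr m k + ∑ b ∈ range k, (b+1) * (cwr m b * cwg m (k-1-b)) := by
  rw [cwtrace_diff, sum_range_succ, cwT_expand m k k le_rfl]
  simp [cws, cwr]
  ring

lemma cwL_cast (m : ℕ) (a b : Fin m) : cwL (m+1) a.castSucc b.castSucc = cwM m a b := by
  simp [cwL, cwM, cwU, cwJ, Matrix.mul_apply, Fin.sum_univ_castSucc, Fin.le_last]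

lemma cwL_last1 (m : ℕ) (b : Fin (m+1)) : cwL (m+1) (Fin.last m) b = 0 := by
  simp only [cwL, cwM, cwU, cwJ, Matrix.mul_apply, Fin.last_le_iff, Matrix.sub_apply,
    Matrix.transpose_apply]
  rw [Finset.sum_eq_single (Fin.last m)]
  · simp [Fin.le_last]
  · intro c _ hc
    simp [hc]
  · simp

lemma cwL_last2 (m : ℕ) (b : Fin (m+1)) : cwL (m+1) b (Fin.last m) = 0 := by
  simp only [cwL, cwM, cwU, cwJ, Matrix.mul_apply, Fin.last_le_iff, Matrix.sub_apply,
    Matrix.transpose_apply]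
  rw [Finset.sum_eq_single (Fin.last m)]
  · simp [Fin.le_last]
  · intro c _ hc
    simp [hc]
  · simp

lemma cwLpow (m k : ℕ) : (∀ a b : Fin m, (cwL (m+1) ^ (k+1)) a.castSucc b.castSucc = (cwM m ^ (k+1)) a b)
    ∧ (∀ b, (cwL (m+1) ^ (k+1)) (Fin.last m) b = 0) ∧ (∀ b, (cwL (m+1) ^ (k+1)) b (Fin.last m) = 0) := by
  induction k with
  | zero => simp [cwL_cast, cwL_last1, cwL_last2]
  | succ k ih =>
    obtain ⟨h1, h2, h3⟩ := ih
    refine ⟨fun a b => ?_, fun b => ?_, fun b => ?_⟩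
    · rw [pow_succ, pow_succ (cwM m), Matrix.mul_apply, Matrix.mul_apply, Fin.sum_univ_castSucc]
      simp [h1, cwL_cast, cwL_last1]
    · rw [pow_succ, Matrix.mul_apply]; simp [h2]
    · rw [pow_succ, Matrix.mul_apply]; simp [cwL_last2]

lemma cwtrL (m k : ℕ) : Matrix.trace (cwL (m+1) ^ (k+1)) = Matrix.trace (cwM m ^ (k+1)) := by
  obtain ⟨h1, h2, h3⟩ := cwLpow m k
  simp [Matrix.trace, Fin.sum_univ_castSucc, h1, h2]

lemma cwr_succ (m k : ℕ) : cwr (m+1) (k+1) = cwg m (k+1) := by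
  obtain ⟨h1, h2, h3⟩ := cwLpow m k
  simp [cwr, cwg, cwtot, Fin.sum_univ_castSucc, h1, h2, h3]

lemma cwtot_one (m : ℕ) : cwtot (1 : Matrix (Fin m) (Fin m) ℚ) = m := by
  simp [cwtot, Matrix.one_apply]

lemma cwr_zero (m : ℕ) : cwr m 0 = m := by simp [cwr, cwtot_one]
lemma cwg_zero (m : ℕ) : cwg m 0 = m := by simp [cwg, cwtot_one]

noncomputable def cwG (m : ℕ) : PowerSeries ℚ := 1 + PowerSeries.X * PowerSeries.mk (cwg m)
noncomputable def cwR (m : ℕ) : PowerSeries ℚ := PowerSeries.X * PowerSeries.mk (cwr m)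

lemma cwG_R (m : ℕ) : cwG m * (1 - cwR m) = 1 := by
  have h : PowerSeries.mk (cwg m) = PowerSeries.mk (cwr m) +
      PowerSeries.X * (PowerSeries.mk (cwr m) * PowerSeries.mk (cwg m)) := by
    ext k
    cases k with
    | zero => simp [cwr_zero, cwg_zero]
    | succ k =>
      rw [map_add, PowerSeries.coeff_succ_X_mul, PowerSeries.coeff_mul]
      simp only [PowerSeries.coeff_mk]
      rw [Finset.Nat.sum_antidiagonal_eq_sum_range_succ (fun i j => cwr m i * cwg m j),
        cwg_expand m (k+1) (k+1) le_rfl]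
      simp [cws, cwr]
  rw [cwG, cwR]
  linear_combination PowerSeries.X * h

lemma cwR_succ (m : ℕ) : 1 - cwR (m+1) = 2 - PowerSeries.X - cwG m := by
  have h : PowerSeries.mk (cwr (m+1)) = 1 + PowerSeries.mk (cwg m) := by
    ext k
    cases k with
    | zero => simp [cwr_zero, cwg_zero]; ring
    | succ k => simp [cwr_succ, PowerSeries.coeff_one]
  rw [cwG, cwR, h]
  ring
def cwrel {m : ℕ} (j : ℕ) (d b : Fin m) : Prop := if Even j then d ≤ b else b ≤ d

instance {m : ℕ} (j : ℕ) (d b : Fin m) : Decidable (cwrel j d b) := by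
  unfold cwrel; infer_instance

open Classical in
noncomputable def cwT (m : ℕ) : ℕ → Fin m → Fin m → Finset (ℕ → ℕ)
  | 0, a, b => if a = b then {Function.update (fun _ => 0) 1 ((a : ℕ) + 1)} else ∅
  | j+1, a, b => (univ.filter (fun d => cwrel j d b)).biUnion
      (fun d => (cwT m j a d).image (fun f => Function.update f (j+2) ((b : ℕ) + 1)))

/-- set of zigzag maps -/
def cwZ (k m : ℕ) : Set (ℕ → ℕ) := {f : ℕ → ℕ |
    (∀ x, x ∉ Finset.Icc 1 k → f x = 0) ∧ (∀ x ∈ Finset.Icc 1 k, f x ∈ Finset.Icc 1 m) ∧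
    ∀ x ∈ Finset.Icc 1 k, ∀ y ∈ Finset.Icc 1 k, zigLe x y → f x ≤ f y}

def cwstep (f : ℕ → ℕ) (j : ℕ) : Prop := if Even j then f (j+1) ≤ f (j+2) else f (j+2) ≤ f (j+1)

lemma cwZ_iff (k m : ℕ) (f : ℕ → ℕ) : f ∈ cwZ (k+1) m ↔
    (∀ x, x ∉ Finset.Icc 1 (k+1) → f x = 0) ∧ (∀ x ∈ Finset.Icc 1 (k+1), f x ∈ Finset.Icc 1 m) ∧
    ∀ j < k, cwstep f j := by
  unfold cwZ
  simp only [Set.mem_ofPred_eq]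
  refine and_congr_right fun h1 => and_congr_right fun h2 => ?_
  constructor
  · intro h j hj
    unfold cwstep
    split_ifs with he
    · refine h (j+1) (by simp; omega) (j+2) (by simp; omega) (Or.inr ⟨?_, ?_, Or.inl rfl⟩)
      · exact he.add_one
      · exact he.add even_two
    · have he := Nat.not_even_iff_odd.1 he
      refine h (j+2) (by simp; omega) (j+1) (by simp; omega) (Or.inr ⟨?_, ?_, Or.inr rfl⟩)
      · exact he.add_even even_two
      · exact he.add_one
  · intro h x hx y hy hxy
    simp only [Finset.mem_Icc] at hx hy
    rcases hxy with rfl | ⟨hox, hey, rfl | rfl⟩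
    · exact le_rfl
    · obtain ⟨c, rfl⟩ := hox
      have := h (2*c) (by omega)
      simpa [cwstep] using this
    · obtain ⟨c, rfl⟩ := hey
      obtain ⟨c, rfl⟩ : ∃ d, c = d + 1 := ⟨c-1, by omega⟩
      have := h (2*c+1) (by omega)
      unfold cwstep at this
      rw [if_neg (by simp)] at this
      convert this using 2 <;> ring

lemma cwT_mem (m j : ℕ) (a b : Fin m) (f : ℕ → ℕ) :
    f ∈ cwT m j a b ↔ f ∈ cwZ (j+1) m ∧ f 1 = a + 1 ∧ f (j+1) = b + 1 := by
  classical
  induction j generalizing b f with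
  | zero =>
    rw [cwZ_iff]
    simp only [cwT]
    constructor
    · intro h
      split_ifs at h with hab
      · subst hab
        simp only [Finset.mem_singleton] at h
        subst h
        refine ⟨⟨?_, ?_, by simp⟩, by simp, by simp⟩
        · intro x hx
          simp at hx
          have : x ≠ 1 := by omega
          simp [this]
        · intro x hx
          simp at hx
          subst hx
          simp
      · simp at h
    · rintro ⟨⟨h1, h2, -⟩, h3, h4⟩
      have hab : a = b := by ext; simp at h4; omega
      rw [if_pos hab, Finset.mem_singleton]
      funext x
      by_cases hx : x = 1
      · subst hx; simp [h3]
      · simp [hx]; apply h1; simp; omega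
  | succ j ih =>
    rw [cwZ_iff]
    simp only [cwT, Finset.mem_biUnion, Finset.mem_filter, Finset.mem_univ, true_and,
      Finset.mem_image]
    constructor
    · rintro ⟨d, hd, f, hf, rfl⟩
      rw [ih, cwZ_iff] at hf
      obtain ⟨⟨h1, h2, h3⟩, h4, h5⟩ := hf
      refine ⟨⟨?_, ?_, ?_⟩, ?_, ?_⟩
      · intro x hx
        simp at hx
        rw [Function.update_of_ne (by omega)]
        apply h1; simp; omega
      · intro x hx
        simp only [Finset.mem_Icc] at hx
        by_cases hxj : x = j + 2
        · subst hxj; simp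
        · rw [Function.update_of_ne hxj]
          apply h2; simp; omega
      · intro i hi
        by_cases hij : i = j
        · subst hij
          unfold cwstep
          unfold cwrel at hd
          simp only [Function.update_self]
          rw [Function.update_of_ne (by omega), h5]
          split_ifs at hd ⊢ <;> · rw [Fin.le_def] at hd; omega
        · have := h3 i (by omega)
          unfold cwstep at this ⊢
          rwa [Function.update_of_ne (by omega), Function.update_of_ne (by omega)]
      · rw [Function.update_of_ne (by omega), h4]
      · simp
    · rintro ⟨⟨h1, h2, h3⟩, h4, h5⟩
      have hj := h2 (j+1) (by simp)
      simp only [Finset.mem_Icc] at hj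
      have hs := h3 j (by omega)
      refine ⟨⟨f (j+1) - 1, by omega⟩, ?_, Function.update f (j+2) 0, ?_, ?_⟩
      · unfold cwrel
        unfold cwstep at hs
        have h5' : f (j+2) = b + 1 := h5
        split_ifs at hs ⊢ <;> · rw [Fin.le_def]; simp only; omega
      · rw [ih, cwZ_iff]
        refine ⟨⟨?_, ?_, ?_⟩, ?_, ?_⟩
        · intro x hx
          simp at hx
          by_cases hxj : x = j + 2
          · subst hxj; simp
          · rw [Function.update_of_ne hxj]
            apply h1; simp; omega
        · intro x hx
          simp only [Finset.mem_Icc] at hx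
          rw [Function.update_of_ne (by omega)]
          apply h2; simp; omega
        · intro i hi
          have := h3 i (by omega)
          unfold cwstep at this ⊢
          rwa [Function.update_of_ne (by omega), Function.update_of_ne (by omega)]
        · rw [Function.update_of_ne (by omega), h4]
        · rw [Function.update_of_ne (by omega)]; simp only; omega
      · have h5' : f (j+2) = b + 1 := h5
        rw [Function.update_idem, ← h5', Function.update_eq_self]

lemma cwT_card_succ (m j : ℕ) (a b : Fin m) :
    ((cwT m (j+1) a b).card : ℚ) = ∑ d, ((cwT m j a d).card : ℚ) * (if cwrel j d b then (1 : ℚ) else 0) := by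
  classical
  simp only [cwT]
  rw [Finset.card_biUnion]
  · push_cast
    rw [Finset.sum_filter]
    refine Finset.sum_congr rfl fun d _ => ?_
    split_ifs
    · rw [Finset.card_image_of_injOn, mul_one]
      intro f hf g hg hfg
      simp only [Finset.mem_coe, cwT_mem, cwZ_iff] at hf hg
      have hf' := hf.1.1 (j+2) (by simp)
      have hg' := hg.1.1 (j+2) (by simp)
      funext x
      by_cases hx : x = j + 2
      · subst hx; rw [hf', hg']
      · have := congrFun hfg x
        simpa [hx] using this
    · simp
  · intro d _ e _ hde
    rw [Function.onFun, Finset.disjoint_left]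
    intro f hf hf'
    simp only [Finset.mem_image, cwT_mem] at hf hf'
    obtain ⟨g, hg, rfl⟩ := hf
    obtain ⟨g', hg', hgg⟩ := hf'
    apply hde
    have := congrFun hgg (j+1)
    rw [Function.update_of_ne (by omega), Function.update_of_ne (by omega), hg.2.2, hg'.2.2] at this
    ext; omega

lemma cwT_card (m n : ℕ) (a b : Fin m) : ((cwT m (2*n) a b).card : ℚ) = (cwM m ^ n) a b := by
  induction n generalizing b with
  | zero =>
    simp only [cwT, pow_zero, Matrix.one_apply]
    split_ifs <;> simp
  | succ n ih =>
    rw [show 2 * (n+1) = (2*n+1)+1 by ring, cwT_card_succ, pow_succ, show cwM m ^ n * cwM m = cwM m ^ n * cwU m * (cwU m)ᵀ by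
        rw [Matrix.mul_assoc]; rfl, Matrix.mul_apply]
    refine Finset.sum_congr rfl fun c _ => ?_
    rw [cwT_card_succ, Matrix.mul_apply]
    congr 1
    · refine Finset.sum_congr rfl fun d _ => ?_
      rw [ih]
      simp [cwrel, cwU]
    · simp [cwrel, cwU]

lemma omegaZig_eq (m k : ℕ) : (omegaZig (2*k+1) m : ℚ) = cwtot (cwM m ^ k) := by
  classical
  have h : cwZ (2*k+1) m = ((univ : Finset (Fin m × Fin m)).biUnion
      (fun ab => cwT m (2*k) ab.1 ab.2) : Finset (ℕ → ℕ)) := by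
    ext f
    simp only [Finset.mem_coe, Finset.mem_biUnion, Finset.mem_univ, true_and, cwT_mem]
    constructor
    · intro hf
      have h1 := hf.2.1 1 (by simp)
      have h2 := hf.2.1 (2*k+1) (by simp)
      simp only [Finset.mem_Icc] at h1 h2
      exact ⟨(⟨f 1 - 1, by omega⟩, ⟨f (2*k+1) - 1, by omega⟩), hf, by simp only; omega,
        by simp only; omega⟩
    · rintro ⟨_, h, -⟩; exact h
  have h' : omegaZig (2*k+1) m = (cwZ (2*k+1) m).ncard := rfl
  rw [h', h, Set.ncard_coe_finset, Finset.card_biUnion]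
  · push_cast
    simp only [cwT_card, cwtot]
    rw [Fintype.sum_prod_type]
  · rintro ⟨a, b⟩ _ ⟨c, d⟩ _ hne
    rw [Function.onFun, Finset.disjoint_left]
    intro f hf hf'
    simp only [cwT_mem] at hf hf'
    apply hne
    ext <;> simp only <;> omega

lemma omegaCrown_eq (m n : ℕ) (hn : 1 ≤ n) : (omegaCrown n m : ℚ) = Matrix.trace (cwM m ^ n) := by
  classical
  set C := {f : ℕ → ℕ |
    (∀ x, x ∉ crownGround n → f x = 0) ∧ (∀ x ∈ crownGround n, f x ∈ Finset.Icc 1 m) ∧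
    ∀ x ∈ crownGround n, ∀ y ∈ crownGround n, crownLe n x y → f x ≤ f y} with hC
  have h' : omegaCrown n m = C.ncard := rfl
  have h : (fun f : ℕ → ℕ => Function.update f (2*n+1) (f 1)) '' C =
     ((univ : Finset (Fin m)).biUnion (fun a => cwT m (2*n) a a) : Finset (ℕ → ℕ)) := by
    ext f
    simp only [Finset.mem_coe, Finset.mem_biUnion, Finset.mem_univ, true_and, cwT_mem,
      Set.mem_image]
    constructor
    · rintro ⟨f, ⟨h1, h2, h3⟩, rfl⟩
      unfold crownGround at h1 h2 h3
      have hf1 := h2 1 (by simp; omega)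
      have hf1' := hf1
      simp only [Finset.mem_Icc] at hf1
      refine ⟨⟨f 1 - 1, by omega⟩, ⟨?_, ?_, ?_⟩, ?_, ?_⟩
      · intro x hx
        simp at hx
        rw [Function.update_of_ne (by omega)]
        apply h1; simp; omega
      · intro x hx
        simp only [Finset.mem_Icc] at hx
        by_cases hxn : x = 2*n+1
        · subst hxn; rw [Function.update_self]; exact hf1'
        · rw [Function.update_of_ne hxn]; apply h2; simp; omega
      · intro x hx y hy hxy
        simp only [Finset.mem_Icc] at hx hy
        rcases hxy with rfl | ⟨hox, hey, hxy⟩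
        · exact le_rfl
        · have hy' : y ≠ 2*n+1 := by
            rintro rfl
            exact absurd hey (by simp)
          rw [Function.update_of_ne hy']
          by_cases hxn : x = 2*n+1
          · subst hxn
            rw [Function.update_self]
            refine h3 1 (by simp; omega) y (by simp; omega) (Or.inr ⟨odd_one, hey, ?_⟩)
            omega
          · rw [Function.update_of_ne hxn]
            refine h3 x (by simp; omega) y (by simp; omega) (Or.inr ⟨hox, hey, ?_⟩)
            omega
      · rw [Function.update_of_ne (by omega)]; simp only; omega
      · rw [Function.update_self]; simp only; omega
    · rintro ⟨a, ⟨h1, h2, h3⟩, h4, h5⟩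
      refine ⟨Function.update f (2*n+1) 0, ⟨?_, ?_, ?_⟩, ?_⟩
      · intro x hx
        simp [crownGround] at hx
        by_cases hxn : x = 2*n+1
        · subst hxn; simp
        · rw [Function.update_of_ne hxn]; apply h1; simp; omega
      · intro x hx
        simp only [crownGround, Finset.mem_Icc] at hx
        rw [Function.update_of_ne (by omega)]; apply h2; simp; omega
      · intro x hx y hy hxy
        simp only [crownGround, Finset.mem_Icc] at hx hy
        rw [Function.update_of_ne (by omega), Function.update_of_ne (by omega)]
        rcases hxy with rfl | ⟨hox, hey, hxy | hxy | ⟨rfl, rfl⟩⟩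
        · exact le_rfl
        · exact h3 x (by simp; omega) y (by simp; omega) (Or.inr ⟨hox, hey, Or.inl hxy⟩)
        · exact h3 x (by simp; omega) y (by simp; omega) (Or.inr ⟨hox, hey, Or.inr hxy⟩)
        · rw [h4, ← h5]
          exact h3 (2*n+1) (by simp) (2*n) (by simp; omega)
            (Or.inr ⟨by simp, hey, Or.inr rfl⟩)
      · rw [Function.update_idem, Function.update_of_ne (by omega), h4, ← h5,
          Function.update_eq_self]
  have hinj : Set.InjOn (fun f : ℕ → ℕ => Function.update f (2*n+1) (f 1)) C := by
    intro f hf g hg hfg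
    have hf' := hf.1 (2*n+1) (by simp [crownGround])
    have hg' := hg.1 (2*n+1) (by simp [crownGround])
    funext x
    by_cases hx : x = 2*n+1
    · subst hx; rw [hf', hg']
    · have := congrFun hfg x
      simpa [hx] using this
  rw [h', ← hinj.ncard_image, h, Set.ncard_coe_finset, Finset.card_biUnion]
  · push_cast
    simp only [cwT_card, Matrix.trace, Matrix.diag_apply]
  · intro a _ c _ hne
    rw [Function.onFun, Finset.disjoint_left]
    intro f hf hf'
    simp only [cwT_mem] at hf hf'
    apply hne
    ext; omega

lemma cwpoly_ext (p q : Polynomial ℚ) (N : ℕ)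
    (h : ∀ m : ℕ, N ≤ m → p.eval (m : ℚ) = q.eval (m : ℚ)) : p = q := by
  apply Polynomial.eq_of_infinite_eval_eq
  have : Set.Infinite ((fun m : ℕ => (m : ℚ)) '' Set.Ici N) :=
    (Set.Ici_infinite N).image (Nat.cast_injective.injOn)
  refine this.mono ?_
  rintro _ ⟨m, hm, rfl⟩
  exact h m hm

lemma cwps_ext (F : PowerSeries (Polynomial ℚ)) (N : ℕ)
    (h : ∀ m : ℕ, N ≤ m → PowerSeries.map (Polynomial.evalRingHom (m : ℚ)) F = 0) : F = 0 := by
  ext1 k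
  apply cwpoly_ext _ _ N
  intro m hm
  have := congrArg (PowerSeries.coeff k) (h m hm)
  simpa using this

lemma cwsum_pairs (n : ℕ) (F : ℕ → Polynomial ℚ) :
    ∑ ij ∈ (Finset.Icc 1 n ×ˢ Finset.Icc 1 n).filter (fun ij => ij.1 < ij.2), F (n - ij.2 + ij.1)
      = ∑ e ∈ range n, (e : Polynomial ℚ) * F e := by
  have : ∀ e ∈ range n, (e : Polynomial ℚ) * F e = ∑ _i ∈ Finset.Icc 1 e, F e := by
    intro e _; simp
  rw [Finset.sum_congr rfl this, Finset.sum_sigma']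
  refine Finset.sum_nbij' (fun ij => ⟨n - ij.2 + ij.1, ij.1⟩) (fun s => (s.2, n - s.1 + s.2))
    ?_ ?_ ?_ ?_ ?_
  · rintro ⟨i, j⟩ h
    simp at h ⊢; omega
  · rintro ⟨e, i⟩ h
    simp at h ⊢; omega
  · rintro ⟨i, j⟩ h
    simp at h ⊢; omega
  · rintro ⟨e, i⟩ h
    simp at h ⊢; omega
  · rintro ⟨i, j⟩ h
    rfl

section
variable (q : ℕ → Polynomial ℚ)

noncomputable def cwc (k : ℕ) : Polynomial ℚ := if k = 0 then 1 else q (2*k-1)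

noncomputable def cwGz (z : ℚ) : PowerSeries ℚ :=
  PowerSeries.map (Polynomial.evalRingHom z) (PowerSeries.mk (cwc q))

lemma cwGz_coeff (z : ℚ) (k : ℕ) : PowerSeries.coeff k (cwGz q z) = (cwc q k).eval z := by
  simp [cwGz]

lemma cwGz_pos (hq : ∀ k, Odd k → ∀ m : ℕ, 1 ≤ m → (q k).eval (m : ℚ) = omegaZig k m)
    (m : ℕ) (hm : 1 ≤ m) : cwGz q m = cwG m := by
  ext k
  rw [cwGz_coeff, cwG]
  cases k with
  | zero => simp [cwc]
  | succ k =>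
    rw [map_add, PowerSeries.coeff_succ_X_mul]
    simp only [cwc, PowerSeries.coeff_mk, PowerSeries.coeff_one]
    rw [if_neg (by omega), if_neg (by omega), show 2*(k+1)-1 = 2*k+1 by omega, hq _ (by simp) m hm,
      omegaZig_eq, zero_add, cwg]

lemma cwGz_rec (hq : ∀ k, Odd k → ∀ m : ℕ, 1 ≤ m → (q k).eval (m : ℚ) = omegaZig k m)
    (z : ℚ) : cwGz q (z+1) * (2 - PowerSeries.X - cwGz q z) = 1 := by
  have hmap : ∀ z : ℚ, PowerSeries.map (Polynomial.evalRingHom z)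
      (PowerSeries.map (Polynomial.compRingHom (Polynomial.X + 1)) (PowerSeries.mk (cwc q)))
       = cwGz q (z+1) := by
    intro z
    ext k
    simp [cwGz_coeff]
  set F : PowerSeries (Polynomial ℚ) :=
    PowerSeries.map (Polynomial.compRingHom (Polynomial.X + 1)) (PowerSeries.mk (cwc q)) *
    (2 - PowerSeries.X - PowerSeries.mk (cwc q)) - 1 with hF
  have hev : ∀ z : ℚ, PowerSeries.map (Polynomial.evalRingHom z) F =
      cwGz q (z+1) * (2 - PowerSeries.X - cwGz q z) - 1 := by
    intro z
    rw [hF, map_sub, map_mul, hmap, map_sub, map_sub, map_one, map_ofNat, PowerSeries.map_X]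
    rfl
  have h0 : F = 0 := by
    apply cwps_ext F 1
    intro m hm
    rw [hev, cwGz_pos q hq m hm]
    have := cwGz_pos q hq (m+1) (by omega)
    push_cast at this
    rw [this, ← cwR_succ, cwG_R, sub_self]
  have := hev z
  rw [h0, map_zero] at this
  linear_combination -this

lemma cwG_zero : cwG 0 = 1 := by
  have : cwg 0 = fun _ => 0 := by
    funext k; simp [cwg, cwtot]
  ext k
  rw [cwG, this]
  cases k with
  | zero => simp
  | succ k => rw [map_add, PowerSeries.coeff_succ_X_mul]; simp

lemma cwGz_nat (hq : ∀ k, Odd k → ∀ m : ℕ, 1 ≤ m → (q k).eval (m : ℚ) = omegaZig k m)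
    (m : ℕ) : cwGz q m = cwG m := by
  rcases Nat.eq_zero_or_pos m with rfl | hm
  · have h1 := cwGz_rec q hq 0
    have h2 := cwGz_pos q hq 1 le_rfl
    have h3 := cwG_R 1
    rw [cwR_succ 0] at h3
    rw [zero_add] at h1
    rw [Nat.cast_one] at h2
    rw [h2] at h1
    rw [Nat.cast_zero]
    linear_combination (2 - PowerSeries.X - cwG 0) * (-h1) + (2 - PowerSeries.X - cwGz q 0) * h3
  · exact cwGz_pos q hq m hm

lemma cwGz_inv (hq : ∀ k, Odd k → ∀ m : ℕ, 1 ≤ m → (q k).eval (m : ℚ) = omegaZig k m)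
    (m : ℕ) : cwGz q (-m) * cwGz q m = 1 := by
  induction m with
  | zero => simp only [Nat.cast_zero, neg_zero]
            have := cwGz_nat q hq 0
            rw [Nat.cast_zero] at this
            rw [this, cwG_zero, one_mul]
  | succ m ih =>
    have h1 := cwGz_rec q hq (-((m+1 : ℕ) : ℚ))
    have h2 := cwGz_rec q hq m
    rw [show -((m+1 : ℕ) : ℚ) + 1 = -m by push_cast; ring] at h1
    have h3 : cwGz q (-((m+1 : ℕ) : ℚ)) = 2 - PowerSeries.X - cwGz q m := by
      linear_combination (-cwGz q m) * h1 + (2 - PowerSeries.X - cwGz q (-((m+1 : ℕ) : ℚ))) * ih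
    rw [h3]
    push_cast
    linear_combination h2

lemma cwGz_neg (hq : ∀ k, Odd k → ∀ m : ℕ, 1 ≤ m → (q k).eval (m : ℚ) = omegaZig k m)
    (m : ℕ) : cwGz q (-m) = 1 - cwR m := by
  have h1 := cwGz_inv q hq m
  have h2 := cwG_R m
  rw [cwGz_nat q hq m] at h1
  linear_combination (1 - cwR m) * h1 - cwGz q (-m) * h2

noncomputable def cwH (n : ℕ) : Polynomial ℚ :=
  - ∑ x ∈ antidiagonal n, (x.1 : Polynomial ℚ) * (cwc q x.1).comp (-Polynomial.X) * cwc q x.2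

lemma cwH_eval (hq : ∀ k, Odd k → ∀ m : ℕ, 1 ≤ m → (q k).eval (m : ℚ) = omegaZig k m)
    (k m : ℕ) : (cwH q (k+1)).eval ((m+1 : ℕ) : ℚ) =
      Matrix.trace (cwM (m+1) ^ (k+1)) - Matrix.trace (cwM m ^ (k+1)) := by
  have hE : ∀ b, (cwc q (b+1)).eval (-((m+1 : ℕ) : ℚ)) = - cwr (m+1) b := by
    intro b
    rw [← cwGz_coeff, cwGz_neg q hq, cwR, map_sub, PowerSeries.coeff_succ_X_mul]
    simp [PowerSeries.coeff_one]
  have hC : ∀ b, (cwc q (b+1)).eval (((m+1 : ℕ) : ℚ)) = cwg (m+1) b := by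
    intro b
    rw [← cwGz_coeff, cwGz_nat q hq, cwG, map_add, PowerSeries.coeff_succ_X_mul]
    simp [PowerSeries.coeff_one]
  rw [← cwtrL m k, cwtrace_formula, cwH, Polynomial.eval_neg, Polynomial.eval_finsetSum,
    Finset.Nat.sum_antidiagonal_eq_sum_range_succ
      (fun i j => Polynomial.eval ((m+1 : ℕ) : ℚ)
        ((i : Polynomial ℚ) * (cwc q i).comp (-Polynomial.X) * cwc q j)),
    sum_range_succ', sum_range_succ]
  simp only [Polynomial.eval_mul, Polynomial.eval_comp, Polynomial.eval_neg, Polynomial.eval_X,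
    Polynomial.eval_natCast, hE]
  have : ∀ b ∈ range k, ((b+1 : ℕ) : ℚ) * -cwr (m+1) b *
      (cwc q (k + 1 - (b+1))).eval ((m+1 : ℕ) : ℚ) =
      -((b+1) * (cwr (m+1) b * cwg (m+1) (k-1-b))) := by
    intro b hb
    rw [Finset.mem_range] at hb
    rw [show k + 1 - (b+1) = (k-1-b)+1 by omega, hC]
    push_cast; ring
  rw [Finset.sum_congr rfl this, Finset.sum_neg_distrib]
  simp [cwc]

lemma cwH_anti (hq : ∀ k, Odd k → ∀ m : ℕ, 1 ≤ m → (q k).eval (m : ℚ) = omegaZig k m)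
    (n : ℕ) (hn : 1 ≤ n) (z : ℚ) : (cwH q n).eval (-z) = - (cwH q n).eval z := by
  have key : (cwH q n).comp (-Polynomial.X) = - cwH q n := by
    apply cwpoly_ext _ _ 0
    intro m _
    have h := congrArg (PowerSeries.coeff n) (cwGz_inv q hq m)
    rw [PowerSeries.coeff_mul, PowerSeries.coeff_one, if_neg (by omega)] at h
    simp only [cwGz_coeff] at h
    simp only [cwH, Polynomial.neg_comp, Polynomial.eval_neg, neg_neg, Polynomial.eval_comp,
      Polynomial.eval_finsetSum, Polynomial.eval_mul, Polynomial.eval_natCast, Polynomial.eval_X]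
    rw [← Finset.Nat.sum_antidiagonal_swap, neg_eq_iff_add_eq_zero, ← Finset.sum_add_distrib]
    rw [← mul_zero (n : ℚ), ← h, Finset.mul_sum]
    refine Finset.sum_congr rfl fun x hx => ?_
    rw [Finset.HasAntidiagonal.mem_antidiagonal] at hx
    rw [← hx]
    simp
    ring
  have := congrArg (Polynomial.eval z) key
  simpa [Polynomial.eval_comp] using this

lemma cwmain (n : ℕ) (hn : 1 ≤ n)
    (p : Polynomial ℚ) (hp : ∀ m : ℕ, 1 ≤ m → p.eval (m : ℚ) = omegaCrown n m)
    (hq : ∀ k, Odd k → ∀ m : ℕ, 1 ≤ m → (q k).eval (m : ℚ) = omegaZig k m) :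
    p = p.comp (-Polynomial.X) + cwH q n := by
  obtain ⟨k, rfl⟩ : ∃ k, n = k + 1 := ⟨n-1, by omega⟩
  have h1 : p.comp (Polynomial.X + 1) - p = (cwH q (k+1)).comp (Polynomial.X + 1) := by
    apply cwpoly_ext _ _ 1
    intro m hm
    have e1 := hp m hm
    have e2 := hp (m+1) (by omega)
    have e3 := cwH_eval q hq k m
    rw [omegaCrown_eq _ _ hn] at e1 e2
    push_cast at e2 e3
    simp [Polynomial.eval_comp, e1, e2, e3]
  have h2 : ∀ z : ℚ, p.eval (z + 1) - p.eval z = (cwH q (k+1)).eval (z+1) := by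
    intro z
    simpa [Polynomial.eval_comp] using congrArg (Polynomial.eval z) h1
  have h3 : ∀ m : ℕ, p.eval (-((m : ℚ) + 1)) = p.eval (m : ℚ) := by
    intro m
    induction m with
    | zero =>
      have a1 := h2 (-1)
      have a2 := cwH_anti q hq (k+1) hn 0
      norm_num at a1 a2 ⊢
      have a3 : (cwH q (k+1)).eval 0 = 0 := by linarith
      linarith
    | succ m ih =>
      have a1 := h2 (-((m : ℚ) + 1 + 1))
      have a2 := cwH_anti q hq (k+1) hn (m+1)
      have a3 := h2 m
      rw [show -((m : ℚ) + 1 + 1) + 1 = -(m+1) by ring] at a1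
      push_cast
      linarith
  apply cwpoly_ext _ _ 1
  intro m hm
  obtain ⟨m, rfl⟩ : ∃ k, m = k + 1 := ⟨m-1, by omega⟩
  simp only [Polynomial.eval_add, Polynomial.eval_comp, Polynomial.eval_neg, Polynomial.eval_X]
  have := h2 m
  have := h3 m
  push_cast
  linarith

end

open Polynomial in
/-- Theorem 4.3, Equation (2): the reciprocity relation
`Ω_{C_{2n}}(t) = Ω_{C_{2n}}(−t) − n·Ω_{Z_{2n−1}}(−t) + t·Ω_{Z_{2n−3}}(t)
  − Σ_{1 ≤ i < j ≤ n, (i,j) ≠ (1,n)} Ω_{Z_{2(n−j+i)−1}}(−t)·Ω_{Z_{2(j−i)−1}}(t)`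
as an identity of polynomials over `ℚ`. -/
theorem crown_order_polynomial_reciprocity (n : ℕ) (hn : 2 ≤ n)
    (p : Polynomial ℚ) (hp : ∀ m : ℕ, 1 ≤ m → p.eval (m : ℚ) = omegaCrown n m)
    (q : ℕ → Polynomial ℚ)
    (hq : ∀ k, Odd k → ∀ m : ℕ, 1 ≤ m → (q k).eval (m : ℚ) = omegaZig k m) :
    p = p.comp (-X) - (n : Polynomial ℚ) * (q (2 * n - 1)).comp (-X)
        + X * q (2 * n - 3)
        - ∑ ij ∈ (Finset.Icc 1 n ×ˢ Finset.Icc 1 n).filter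
            (fun ij => ij.1 < ij.2 ∧ ij ≠ (1, n)),
            (q (2 * (n - ij.2 + ij.1) - 1)).comp (-X) * q (2 * (ij.2 - ij.1) - 1) := by
  have hm := cwmain q n (by omega) p hp hq
  have hq1 : q 1 = Polynomial.X := by
    apply cwpoly_ext _ _ 1
    intro m hm
    have h := omegaZig_eq m 0
    rw [hq 1 odd_one m hm]
    simpa [cwtot_one] using h
  have hS := cwsum_pairs n (fun e => (cwc q e).comp (-X) * cwc q (n - e))
  have hfil : (Finset.Icc 1 n ×ˢ Finset.Icc 1 n).filter
            (fun ij => ij.1 < ij.2 ∧ ij ≠ (1, n)) =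
      ((Finset.Icc 1 n ×ˢ Finset.Icc 1 n).filter (fun ij => ij.1 < ij.2)).erase (1, n) := by
    ext ij
    simp only [Finset.mem_filter, Finset.mem_erase]
    tauto
  have hmem : ((1, n) : ℕ × ℕ) ∈
      (Finset.Icc 1 n ×ˢ Finset.Icc 1 n).filter (fun ij => ij.1 < ij.2) := by
    simp; omega
  have hcong : ∀ ij ∈ (Finset.Icc 1 n ×ˢ Finset.Icc 1 n).filter (fun ij : ℕ × ℕ => ij.1 < ij.2),
      (q (2 * (n - ij.2 + ij.1) - 1)).comp (-X) * q (2 * (ij.2 - ij.1) - 1) =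
      (cwc q (n - ij.2 + ij.1)).comp (-X) * cwc q (n - (n - ij.2 + ij.1)) := by
    rintro ⟨i, j⟩ h
    simp at h
    simp only [cwc]
    rw [if_neg (by omega), if_neg (by omega), show n - (n - j + i) = j - i by omega]
  rw [hfil, Finset.sum_erase_eq_sub hmem, Finset.sum_congr rfl hcong, hS]
  have hlast : (q (2 * (n - n + 1) - 1)).comp (-X) * q (2 * (n - 1) - 1) = -(X * q (2*n-3)) := by
    rw [show 2 * (n - n + 1) - 1 = 1 by omega, show 2 * (n-1) - 1 = 2*n-3 by omega, hq1]
    simp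
  simp only [hlast]
  have hH : cwH q n = - ((n : Polynomial ℚ) * (q (2*n-1)).comp (-X)) -
      ∑ e ∈ Finset.range n, (e : Polynomial ℚ) * ((cwc q e).comp (-X) * cwc q (n - e)) := by
    rw [cwH, Finset.Nat.sum_antidiagonal_eq_sum_range_succ
      (fun i j => (i : Polynomial ℚ) * (cwc q i).comp (-X) * cwc q j), Finset.sum_range_succ]
    have : n ≠ 0 := by omega
    simp [cwc, this, mul_assoc]
    ring
  rw [hH] at hm
  linear_combination hm
end
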